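/- arXiv:1505.04452 — 4 statements merged into one kernel-verified Lean document; each statement's English description precedes it below -/
import Mathlib

section
/- Let S ⊆ Q be a subset of the Hilbert cube such that S meets every continuum from the face W_1^+ to the face W_1^-. Then S (with the subspace topology) is strongly infinite dimensional. -/
open Set

/-- A separator between `A` and `B` in a topological space: a closed set `L` whose
complement is the union of two disjoint open sets containing `A` and `B` respectively. -/
def IsSeparator {X : Type*} [TopologicalSpace X] (A B L : Set X) : Prop :=
  IsClosed L ∧ ∃ U V : Set X, IsOpen U ∧ IsOpen V ∧ Disjoint U V ∧
    A ⊆ U ∧ B ⊆ V ∧ Lᶜ = U ∪ V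

/-- A family of pairs of sets is essential if every choice of separators has
nonempty intersection. -/
def IsEssentialFamily {X : Type*} [TopologicalSpace X] {Γ : Type*}
    (A B : Γ → Set X) : Prop :=
  ∀ L : Γ → Set X, (∀ i, IsSeparator (A i) (B i) (L i)) → (⋂ i, L i).Nonempty

/-- A space is strongly infinite dimensional if it admits a countably infinite
essential family of pairs of disjoint closed subsets. -/
def StronglyInfiniteDimensional (X : Type*) [TopologicalSpace X] : Prop :=
  ∃ A B : ℕ → Set X,
    (∀ n, IsClosed (A n) ∧ IsClosed (B n) ∧ Disjoint (A n) (B n)) ∧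
    IsEssentialFamily A B

/-- The Hilbert cube `Q = [-1,1]^ℕ`. -/
abbrev HilbertCube : Type := ℕ → Set.Icc (-1 : ℝ) 1

/-- The negative face `W_i^- = {x ∈ Q : x_i = -1}`. -/
def negFace (i : ℕ) : Set HilbertCube := {x | (x i : ℝ) = -1}

/-- The positive face `W_i^+ = {x ∈ Q : x_i = 1}`. -/
def posFace (i : ℕ) : Set HilbertCube := {x | (x i : ℝ) = 1}

namespace HCProof

section comb
set_option linter.unusedSectionVars false
variable {ι : Type*} [Fintype ι] [DecidableEq ι]

/-- Integral over the cube at `x` spanned by `D` of the cup product of coboundaries. -/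
def E : List ((ι → ℤ) → ZMod 2) → Finset ι → (ι → ℤ) → ZMod 2
  | [], _, _ => 1
  | φ :: l, D, x => ∑ d ∈ D, (φ (x + Pi.single d 1) - φ x) * E l (D.erase d) (x + Pi.single d 1)

lemma sum_swap (D : Finset ι) (f : ι → ι → ZMod 2) :
    ∑ d ∈ D, ∑ d' ∈ D.erase d, f d d' = ∑ d ∈ D, ∑ d' ∈ D.erase d, f d' d := by
  refine Finset.sum_comm' ?_
  intro x y
  simp only [Finset.mem_erase]
  tauto

lemma sum_symm (D : Finset ι) (f : ι → ι → ZMod 2) (hf : ∀ a b, f a b = f b a) :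
    ∑ d ∈ D, ∑ d' ∈ D.erase d, f d d' = 0 := by
  rw [Finset.sum_sigma']
  refine Finset.sum_involution (fun p _ => ⟨p.2, p.1⟩) ?_ ?_ ?_ ?_
  · intro p _
    change f p.1 p.2 + f p.2 p.1 = 0
    rw [hf p.2 p.1]
    exact CharTwo.add_self_eq_zero _
  · rintro ⟨a, b⟩ hp _ h
    simp only [Finset.mem_sigma, Finset.mem_erase] at hp
    exact hp.2.1 (congrArg Sigma.fst h)
  · rintro ⟨a, b⟩ hp
    simp only [Finset.mem_sigma, Finset.mem_erase] at hp ⊢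
    exact ⟨hp.2.2, fun h => hp.2.1 h.symm, hp.1⟩
  · intro p _
    rfl

lemma E_closed (l : List ((ι → ℤ) → ZMod 2)) : ∀ (D : Finset ι) (x : ι → ℤ),
    D.card = l.length + 1 →
    ∑ d ∈ D, E l (D.erase d) (x + Pi.single d 1) = ∑ d ∈ D, E l (D.erase d) x := by
  induction l with
  | nil => intro D x _; simp [E]
  | cons φ l ih =>
    intro D x hD
    have hcard : ∀ d ∈ D, (D.erase d).card = l.length + 1 := by
      intro d hd
      rw [Finset.card_erase_of_mem hd, hD]; simp
    have e1 : ∑ d ∈ D, E (φ :: l) (D.erase d) (x + Pi.single d 1)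
        = ∑ d ∈ D, φ (x + Pi.single d 1) *
          ∑ d' ∈ D.erase d, E l ((D.erase d).erase d') (x + Pi.single d 1) := by
      have h0 := sum_symm D (fun d d' => φ (x + Pi.single d 1 + Pi.single d' 1) *
        E l ((D.erase d).erase d') (x + Pi.single d 1 + Pi.single d' 1)) (by
          intro a b
          simp only [add_right_comm x (Pi.single a 1) (Pi.single b 1), Finset.erase_right_comm])
      have : ∑ d ∈ D, E (φ :: l) (D.erase d) (x + Pi.single d 1)
        = ∑ d ∈ D, ∑ d' ∈ D.erase d, φ (x + Pi.single d 1 + Pi.single d' 1) *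
          E l ((D.erase d).erase d') (x + Pi.single d 1 + Pi.single d' 1)
          + ∑ d ∈ D, φ (x + Pi.single d 1) *
          ∑ d' ∈ D.erase d, E l ((D.erase d).erase d') (x + Pi.single d 1 + Pi.single d' 1) := by
        rw [← Finset.sum_add_distrib]
        refine Finset.sum_congr rfl fun d _ => ?_
        rw [E, Finset.mul_sum, ← Finset.sum_add_distrib]
        refine Finset.sum_congr rfl fun d' _ => ?_
        rw [CharTwo.sub_eq_add, add_mul]
      rw [this, h0, zero_add]
      refine Finset.sum_congr rfl fun d hd => ?_
      rw [ih _ _ (hcard d hd)]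
    have e2 : ∑ d ∈ D, E (φ :: l) (D.erase d) x
        = ∑ d ∈ D, φ (x + Pi.single d 1) *
          ∑ d' ∈ D.erase d, E l ((D.erase d).erase d') (x + Pi.single d 1) := by
      have h0 := sum_symm D (fun d d' => E l ((D.erase d).erase d') x) (by
          intro a b
          simp only [Finset.erase_right_comm])
      have : ∑ d ∈ D, E (φ :: l) (D.erase d) x
        = ∑ d ∈ D, ∑ d' ∈ D.erase d, φ (x + Pi.single d' 1) *
          E l ((D.erase d).erase d') (x + Pi.single d' 1)
          + φ x * ∑ d ∈ D,
          ∑ d' ∈ D.erase d, E l ((D.erase d).erase d') (x + Pi.single d' 1) := by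
        rw [Finset.mul_sum, ← Finset.sum_add_distrib]
        refine Finset.sum_congr rfl fun d _ => ?_
        rw [E, Finset.mul_sum, ← Finset.sum_add_distrib]
        refine Finset.sum_congr rfl fun d' _ => ?_
        rw [CharTwo.sub_eq_add, add_mul]
      rw [this, Finset.sum_congr rfl fun d hd => ih _ _ (hcard d hd), h0, mul_zero, add_zero,
        sum_swap]
      refine Finset.sum_congr rfl fun d hd => ?_
      rw [Finset.mul_sum]
      refine Finset.sum_congr rfl fun d' _ => ?_
      rw [Finset.erase_right_comm]
    rw [e1, e2]

lemma E_stokes (ψ : (ι → ℤ) → ZMod 2) (l : List ((ι → ℤ) → ZMod 2)) (D : Finset ι) (x : ι → ℤ)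
    (hD : D.card = l.length + 1) :
    E (ψ :: l) D x = ∑ d ∈ D, (ψ (x + Pi.single d 1) * E l (D.erase d) (x + Pi.single d 1)
      - ψ x * E l (D.erase d) x) := by
  rw [Finset.sum_sub_distrib, ← Finset.mul_sum, ← E_closed l D x hD, Finset.mul_sum,
    ← Finset.sum_sub_distrib, E]
  refine Finset.sum_congr rfl fun d _ => ?_
  ring

lemma E_const (l : List ((ι → ℤ) → ZMod 2)) : ∀ (D : Finset ι) (x : ι → ℤ) (φ) (_ : φ ∈ l)
    (c : ZMod 2) (_ : ∀ y, (∀ i, x i ≤ y i ∧ y i ≤ x i + if i ∈ D then 1 else 0) → φ y = c),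
    E l D x = 0 := by
  induction l with
  | nil => intro D x φ h; simp at h
  | cons f l ih =>
    intro D x φ hφ c hc
    rw [E]
    refine Finset.sum_eq_zero fun d hd => ?_
    rcases List.mem_cons.1 hφ with rfl | h
    · rw [hc x, hc (x + Pi.single d 1)]
      · simp
      · intro i
        by_cases hi : i = d
        · subst hi; simp [hd]
        · simp [hi]; split_ifs <;> simp
      · intro i; split_ifs <;> simp
    · rw [ih (D.erase d) (x + Pi.single d 1) φ h c, mul_zero]
      intro y hy
      apply hc
      intro i
      have := hy i
      by_cases hi : i = d
      · subst hi; simp at this; simp [hd]; omega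
      · simpa [hi] using this

lemma finsupp_box {g : (ι → ℤ) → ZMod 2} (a b : ι → ℤ)
    (h : ∀ x, g x ≠ 0 → ∀ i, a i ≤ x i ∧ x i ≤ b i) : Function.HasFiniteSupport g := by
  refine (Set.finite_Icc a b).subset ?_
  intro x hx
  exact ⟨fun i => (h x hx i).1, fun i => (h x hx i).2⟩

/-- boundary condition -/
def Bd (N : ℤ) (i : ι) (f : (ι → ℤ) → ZMod 2) : Prop :=
  (∃ c, ∀ x, x i ≤ 0 → f x = c) ∧ (∃ c, ∀ x, N ≤ x i → f x = c)

lemma E_bd {N : ℤ} {i : ι} {f : (ι → ℤ) → ZMod 2} (hf : Bd N i f)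
    (l : List ((ι → ℤ) → ZMod 2)) (h : f ∈ l) (D : Finset ι) (x : ι → ℤ) (hE : E l D x ≠ 0) :
    0 ≤ x i ∧ x i ≤ N := by
  obtain ⟨⟨c, hc⟩, ⟨c', hc'⟩⟩ := hf
  by_contra hcon
  apply hE
  by_cases h0 : x i < 0
  · refine E_const l D x f h c fun y hy => hc y ?_
    have := (hy i).2
    split_ifs at this <;> omega
  · refine E_const l D x f h c' fun y hy => hc' y ?_
    have := (hy i).1
    omega

lemma sum_E_eq_one {N : ℤ} (hN : 1 ≤ N) (φ : ι → (ι → ℤ) → ZMod 2)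
    (h0 : ∀ i x, x i ≤ 0 → φ i x = 0) (h1 : ∀ i x, N ≤ x i → φ i x = 1) (l : List ι) :
    l.Nodup → ∀ a : ι → ℤ,
    ∑ᶠ x : ι → ℤ, (if ∀ j, j ∉ l → x j = a j then E (l.map φ) l.toFinset x else 0) = 1 := by
  induction l with
  | nil =>
    intro _ a
    rw [finsum_eq_single _ a]
    · simp [E]
    · intro x hx
      rw [if_neg]
      intro h
      exact hx (funext fun j => h j (by simp))
  | cons i l ih =>
    intro hl a
    obtain ⟨hil, hl⟩ := List.nodup_cons.1 hl
    have hbd : ∀ j, Bd N j (φ j) := fun j => ⟨⟨0, h0 j⟩, ⟨1, h1 j⟩⟩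
    set χ : (ι → ℤ) → ZMod 2 := fun x => if 0 < x i then 1 else 0 with hχ
    set ψ : (ι → ℤ) → ZMod 2 := fun x => φ i x - χ x with hψ
    have hψ0 : ∀ x, x i ≤ 0 → ψ x = 0 := by
      intro x hx
      simp [hψ, hχ, h0 i x hx, not_lt.2 hx]
    have hψ1 : ∀ x, N ≤ x i → ψ x = 0 := by
      intro x hx
      have : 0 < x i := by omega
      simp [hψ, hχ, h1 i x hx, this]
    have hψbd : Bd N i ψ := ⟨⟨0, hψ0⟩, ⟨0, hψ1⟩⟩
    have hχbd : Bd N i χ := ⟨⟨0, fun x hx => by simp [hχ, not_lt.2 hx]⟩,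
      ⟨1, fun x hx => by have : 0 < x i := by omega
                         simp [hχ, this]⟩⟩
    set D := (i :: l).toFinset with hD
    have hDc : D.card = (l.map φ).length + 1 := by
      rw [hD, List.toFinset_card_of_nodup (List.nodup_cons.2 ⟨hil, hl⟩)]; simp
    set w : (ι → ℤ) → Prop := fun x => ∀ j, j ∉ i :: l → x j = a j with hw
    -- finite supports
    have fs : ∀ f, Bd N i f → Function.HasFiniteSupport
        (fun x => if w x then E (f :: l.map φ) D x else 0) := by
      intro f hf
      refine finsupp_box (fun j => min (a j) 0) (fun j => max (a j) N) fun x hx j => ?_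
      have hwx : w x := by by_contra hc; simp [hc] at hx
      simp only [hwx, if_true] at hx
      by_cases hj : j ∈ i :: l
      · have : 0 ≤ x j ∧ x j ≤ N := by
          rcases List.mem_cons.1 hj with rfl | hj
          · exact E_bd hf _ (by simp) D x hx
          · exact E_bd (hbd j) _ (List.mem_cons_of_mem _ (List.mem_map_of_mem hj)) D x hx
        omega
      · have := hwx j hj
        omega
    have hsplit : ∀ x, (if w x then E (φ i :: l.map φ) D x else 0)
        = (if w x then E (χ :: l.map φ) D x else 0) + (if w x then E (ψ :: l.map φ) D x else 0) := by
      intro x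
      split_ifs
      · simp only [E]
        rw [← Finset.sum_add_distrib]
        refine Finset.sum_congr rfl fun d _ => ?_
        simp only [hψ]; ring
      · simp
    have hψsum : ∑ᶠ x, (if w x then E (ψ :: l.map φ) D x else 0) = 0 := by
      set g : ι → (ι → ℤ) → ZMod 2 := fun d x =>
        if w x then ψ x * E (l.map φ) (D.erase d) x else 0 with hg
      have hgf : ∀ d, Function.HasFiniteSupport (g d) := by
        intro d
        refine finsupp_box (fun j => min (a j) 0) (fun j => max (a j) N) fun x hx j => ?_
        have hwx : w x := by by_contra hc; simp [hg, hc] at hx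
        simp only [hg, hwx, if_true] at hx
        by_cases hj : j ∈ i :: l
        · have : 0 ≤ x j ∧ x j ≤ N := by
            rcases List.mem_cons.1 hj with rfl | hj
            · have := left_ne_zero_of_mul hx
              by_contra hc
              by_cases h : x j ≤ 0
              · exact this (hψ0 x h)
              · exact this (hψ1 x (by omega))
            · exact E_bd (hbd j) _ (List.mem_map_of_mem hj) _ x (right_ne_zero_of_mul hx)
          omega
        · have := hwx j hj
          omega
      have hgf' : ∀ d, Function.HasFiniteSupport (fun x : ι → ℤ => g d (x + Pi.single d (1 : ℤ))) := by
        intro d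
        exact (hgf d).preimage ((add_left_injective _).injOn)
      have : ∀ x, (if w x then E (ψ :: l.map φ) D x else 0)
          = ∑ d ∈ D, (g d (x + Pi.single d 1) - g d x) := by
        intro x
        have hwd : ∀ d ∈ D, (w (x + Pi.single d 1) ↔ w x) := by
          intro d hd
          refine forall_congr' fun j => forall_congr' fun hj => ?_
          have : j ≠ d := by
            rintro rfl
            exact hj (List.mem_toFinset.1 hd)
          simp [this]
        by_cases hwx : w x
        · rw [if_pos hwx, E_stokes _ _ _ _ hDc]
          refine Finset.sum_congr rfl fun d hd => ?_
          simp only [hg, (hwd d hd), hwx, if_true]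
        · rw [if_neg hwx, Finset.sum_eq_zero]
          intro d hd
          simp only [hg, (hwd d hd), hwx, if_false, sub_zero]
      rw [finsum_congr this, finsum_sum_comm D (fun x d => g d (x + Pi.single d 1) - g d x)
        (fun d _ => (hgf' d).sub (hgf d))]
      refine Finset.sum_eq_zero fun d _ => ?_
      rw [finsum_sub_distrib (hgf' d) (hgf d), sub_eq_zero]
      exact finsum_comp_equiv (Equiv.addRight (Pi.single d (1 : ℤ))) (f := g d)
    have hmap : (i :: l).map φ = φ i :: l.map φ := rfl
    rw [hmap]
    change ∑ᶠ x, (if w x then E (φ i :: l.map φ) D x else 0) = 1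
    rw [finsum_congr hsplit, finsum_add_distrib (fs χ hχbd) (fs ψ hψbd), hψsum, add_zero]
    rw [← ih hl (Function.update a i 1),
      ← finsum_comp_equiv (Equiv.addRight (Pi.single i (1 : ℤ))) (f := fun x : ι → ℤ =>
        if ∀ j, j ∉ l → x j = Function.update a i 1 j then E (l.map φ) l.toFinset x else 0)]
    refine finsum_congr fun x => ?_
    have hEχ : E (χ :: l.map φ) D x = if x i = 0 then
        E (l.map φ) l.toFinset (x + Pi.single i 1) else 0 := by
      rw [E, Finset.sum_eq_single i]
      · have : D.erase i = l.toFinset := by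
          rw [hD, List.toFinset_cons, Finset.erase_insert]
          simpa using hil
        rw [this]
        simp only [hχ, Pi.add_apply, Pi.single_eq_same]
        split_ifs <;> first | omega | simp
      · intro d _ hd
        simp [hχ, Ne.symm hd]
      · intro h
        exact absurd (by simp [hD]) h
    rw [hEχ]
    have hiff : (w x ∧ x i = 0) ↔
        ∀ j, j ∉ l → (Equiv.addRight (Pi.single i (1 : ℤ)) x) j = Function.update a i 1 j := by
      simp only [hw, Equiv.coe_addRight, Pi.add_apply]
      constructor
      · rintro ⟨h, hi⟩ j hj
        by_cases hji : j = i
        · subst hji; simp [hi]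
        · simp [hji, h j (by simp [hji, hj])]
      · intro h
        refine ⟨fun j hj => ?_, ?_⟩
        · simp only [List.mem_cons, not_or] at hj
          simpa [hj.1] using h j hj.2
        · simpa using h i hil
    simp only [← hiff]
    by_cases hA : w x <;> by_cases hB : x i = 0 <;> simp [hA, hB]

/-- The combinatorial cube lemma. -/
lemma cube_lemma {N : ℤ} (hN : 1 ≤ N) (φ : ι → (ι → ℤ) → ZMod 2)
    (h0 : ∀ i x, x i ≤ 0 → φ i x = 0) (h1 : ∀ i x, N ≤ x i → φ i x = 1) :
    ∃ x : ι → ℤ, ∀ i (c : ZMod 2), ∃ y, (∀ j, x j ≤ y j ∧ y j ≤ x j + 1) ∧ φ i y ≠ c := by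
  by_contra! hcon
  have := sum_E_eq_one hN φ h0 h1 (Finset.univ : Finset ι).toList (Finset.nodup_toList _) 0
  rw [finsum_eq_zero_of_forall_eq_zero] at this
  · exact zero_ne_one this
  · intro x
    obtain ⟨i, c, h⟩ := hcon x
    rw [E_const _ _ x (φ i) (List.mem_map_of_mem (by simp)) c, ite_self]
    intro y hy
    apply h
    intro j
    simpa using hy j

end comb

/-- Essentiality of the faces of a finite cube. -/
lemma finite_cube (n : ℕ) (U V : Fin n → Set (Fin n → Set.Icc (-1 : ℝ) 1))
    (hU : ∀ i, IsOpen (U i)) (hV : ∀ i, IsOpen (V i)) (hUV : ∀ i, Disjoint (U i) (V i))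
    (hp : ∀ i x, (x i : ℝ) = 1 → x ∈ U i) (hm : ∀ i x, (x i : ℝ) = -1 → x ∈ V i)
    (hcov : ∀ x, ∃ i, x ∈ U i ∨ x ∈ V i) : False := by
  classical
  obtain ⟨δ, hδ, hleb⟩ := lebesgue_number_lemma_of_metric (s := univ)
    (c := fun p : Fin n × Bool => if p.2 then U p.1 else V p.1) isCompact_univ
    (by rintro ⟨i, b⟩; cases b <;> simp [hU, hV])
    (by
      intro x _
      obtain ⟨i, h | h⟩ := hcov x
      · exact mem_iUnion.2 ⟨(i, true), by simpa using h⟩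
      · exact mem_iUnion.2 ⟨(i, false), by simpa using h⟩)
  obtain ⟨M, hM⟩ := exists_nat_gt (2 / δ)
  set N : ℕ := M + 1 with hN
  have hNpos : (0 : ℝ) < N := by positivity
  have hNδ : 2 / (N : ℝ) < δ := by
    rw [div_lt_iff₀ hNpos]
    rw [div_lt_iff₀ hδ] at hM
    have : (N : ℝ) = M + 1 := by simp [hN]
    rw [this]; nlinarith
  set p : (Fin n → ℤ) → (Fin n → Set.Icc (-1 : ℝ) 1) := fun x i =>
    Set.projIcc (-1 : ℝ) 1 (by norm_num) (-1 + 2 * (x i : ℝ) / N) with hpdef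
  have hx0 : ∀ i x, x i ≤ 0 → p x ∈ V i := by
    intro i x hx
    apply hm
    simp only [hpdef]
    rw [Set.projIcc_of_le_left]
    have : (x i : ℝ) ≤ 0 := by exact_mod_cast hx
    have : 2 * (x i : ℝ) / N ≤ 0 := div_nonpos_of_nonpos_of_nonneg (by linarith) hNpos.le
    linarith
  have hx1 : ∀ i x, (N : ℤ) ≤ x i → p x ∈ U i := by
    intro i x hx
    apply hp
    simp only [hpdef]
    rw [Set.projIcc_of_right_le]
    have : (N : ℝ) ≤ (x i : ℝ) := by exact_mod_cast hx
    have : 2 ≤ 2 * (x i : ℝ) / N := by rw [le_div_iff₀ hNpos]; linarith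
    linarith
  obtain ⟨x, hx⟩ := cube_lemma (N := (N : ℤ)) (by simp [hN])
    (fun i x => if p x ∈ U i then (1 : ZMod 2) else 0)
    (fun i x h => if_neg (fun h' => (hUV i).le_bot ⟨h', hx0 i x h⟩))
    (fun i x h => if_pos (hx1 i x h))
  obtain ⟨⟨i, b⟩, hb⟩ := hleb (p x) (mem_univ _)
  have hclose : ∀ y : Fin n → ℤ, (∀ j, x j ≤ y j ∧ y j ≤ x j + 1) →
      p y ∈ Metric.ball (p x) δ := by
    intro y hy
    rw [Metric.mem_ball]
    refine lt_of_le_of_lt ?_ hNδ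
    rw [dist_pi_le_iff (by positivity)]
    intro j
    rw [Subtype.dist_eq, Real.dist_eq]
    simp only [hpdef]
    refine (Set.abs_projIcc_sub_projIcc _).trans ?_
    have h1 : (x j : ℝ) ≤ y j := by exact_mod_cast (hy j).1
    have h2 : (y j : ℝ) ≤ x j + 1 := by exact_mod_cast (hy j).2
    have : -1 + 2 * (y j : ℝ) / N - (-1 + 2 * (x j : ℝ) / N) = 2 * (y j - x j : ℝ) / N := by ring
    rw [this, abs_of_nonneg (div_nonneg (by linarith) hNpos.le)]
    gcongr
    linarith
  cases b
  · obtain ⟨y, hy, h⟩ := hx i 0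
    have hy' : p y ∈ V i := by simpa using hb (hclose y hy)
    exact h (if_neg (fun h' => (hUV i).le_bot ⟨h', hy'⟩))
  · obtain ⟨y, hy, h⟩ := hx i 1
    have hy' : p y ∈ U i := by simpa using hb (hclose y hy)
    exact h (if_pos hy')

/-- Essentiality of the faces of the Hilbert cube. -/
lemma hilbert_cube (U V : ℕ → Set HilbertCube)
    (hU : ∀ i, IsOpen (U i)) (hV : ∀ i, IsOpen (V i)) (hUV : ∀ i, Disjoint (U i) (V i))
    (hp : ∀ i, posFace i ⊆ U i) (hm : ∀ i, negFace i ⊆ V i) :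
    ∃ x, ∀ i, x ∉ U i ∧ x ∉ V i := by
  by_contra! hcon
  obtain ⟨t, ht⟩ := (isCompact_univ (X := HilbertCube)).elim_finite_subcover
    (fun i => U i ∪ V i) (fun i => (hU i).union (hV i)) (by
      intro x _
      obtain ⟨i, hi⟩ := hcon x
      refine mem_iUnion.2 ⟨i, ?_⟩
      by_cases h : x ∈ U i
      · exact Or.inl h
      · exact Or.inr (hi h))
  obtain ⟨n, hn⟩ : ∃ n, ∀ i ∈ t, i < n := ⟨t.sup id + 1, fun i hi =>
    Nat.lt_succ_of_le (Finset.le_sup (f := id) hi)⟩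
  set F : (Fin n → Set.Icc (-1 : ℝ) 1) → HilbertCube := fun x i =>
    if h : i < n then x ⟨i, h⟩ else ⟨0, by norm_num⟩ with hF
  have hFc : Continuous F := by
    refine continuous_pi fun i => ?_
    simp only [hF]
    split_ifs with h
    · exact continuous_apply _
    · exact continuous_const
  have hFi : ∀ x (i : Fin n), F x i = x i := by
    intro x i
    simp [hF]
  refine finite_cube n (fun i => F ⁻¹' U i) (fun i => F ⁻¹' V i)
    (fun i => (hU i).preimage hFc) (fun i => (hV i).preimage hFc)
    (fun i => (hUV i).preimage F) ?_ ?_ ?_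
  · intro i x hx
    apply hp i
    change (F x i : ℝ) = 1
    rw [hFi]; exact hx
  · intro i x hx
    apply hm i
    change (F x i : ℝ) = -1
    rw [hFi]; exact hx
  · intro x
    have := ht (mem_univ (F x))
    simp only [mem_iUnion] at this
    obtain ⟨i, hi, h⟩ := this
    exact ⟨⟨i, hn i hi⟩, h⟩

lemma isClosed_posFace (i : ℕ) : IsClosed (posFace i) :=
  isClosed_eq (continuous_subtype_val.comp (continuous_apply i)) continuous_const

lemma isClosed_negFace (i : ℕ) : IsClosed (negFace i) :=
  isClosed_eq (continuous_subtype_val.comp (continuous_apply i)) continuous_const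

lemma disjoint_faces (i : ℕ) : Disjoint (posFace i) (negFace i) := by
  rw [Set.disjoint_left]
  intro x h1 h2
  simp only [posFace, negFace, mem_ofPred_eq] at h1 h2
  linarith

/-- Boundary bumping type lemma: either a clopen partition or a connecting continuum. -/
lemma clopen_or_continuum {X : Type*} [TopologicalSpace X] [CompactSpace X] [T2Space X]
    (A B : Set X) (hA : IsClosed A) (hB : IsClosed B)
    (h : ∀ a ∈ A, Disjoint (connectedComponent a) B) :
    ∃ C : Set X, IsClopen C ∧ A ⊆ C ∧ Disjoint C B := by
  have key : ∀ a ∈ A, ∃ C : Set X, IsClopen C ∧ a ∈ C ∧ Disjoint C B := by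
    intro a ha
    have hd := h a ha
    rw [connectedComponent_eq_iInter_isClopen] at hd
    have hd' : B ∩ ⋂ s : { s : Set X // IsClopen s ∧ a ∈ s }, (s : Set X) = ∅ := by
      rw [inter_comm]; exact Set.disjoint_iff_inter_eq_empty.1 hd
    obtain ⟨t, ht⟩ := hB.isCompact.elim_finite_subfamily_closed
      (fun s : { s : Set X // IsClopen s ∧ a ∈ s } => (s : Set X)) (fun s => s.2.1.1) hd'
    refine ⟨⋂ s ∈ t, (s : Set X), ?_, ?_, ?_⟩
    · exact isClopen_biInter_finset fun s _ => s.2.1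
    · exact mem_iInter₂.2 fun s _ => s.2.2
    · rw [Set.disjoint_iff_inter_eq_empty, inter_comm]; exact ht
  choose! C hC1 hC2 hC3 using key
  obtain ⟨t, htA, ht⟩ := hA.isCompact.elim_nhds_subcover C
    (fun a ha => (hC1 a ha).2.mem_nhds (hC2 a ha))
  refine ⟨⋃ a ∈ t, C a, ?_, ht, ?_⟩
  · exact isClopen_biUnion_finset fun a ha => hC1 a (htA a ha)
  · simp only [Set.disjoint_iUnion_left]
    exact fun a ha => hC3 a (htA a ha)

/-- Extension of separators from a subspace. -/
lemma extend_sep (S : Set HilbertCube) (k : ℕ) (U V : Set S) (hU : IsOpen U) (hV : IsOpen V)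
    (hUV : Disjoint U V) (hA : {x : S | (1 / 2 : ℝ) ≤ (x.1 k : ℝ)} ⊆ U)
    (hB : {x : S | (x.1 k : ℝ) ≤ -(1 / 2 : ℝ)} ⊆ V) :
    ∃ U' V' : Set HilbertCube, IsOpen U' ∧ IsOpen V' ∧ Disjoint U' V' ∧ posFace k ⊆ U' ∧
      negFace k ⊆ V' ∧ (∀ x ∈ U, x.1 ∈ U') ∧ (∀ x ∈ V, x.1 ∈ V') := by
  have hc : Continuous fun x : HilbertCube => (x k : ℝ) :=
    continuous_subtype_val.comp (continuous_apply k)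
  have half : ∀ (U V : Set S), IsOpen V → Disjoint U V →
      Disjoint (closure (Subtype.val '' U)) (Subtype.val '' V) := by
    intro U V hV hUV
    obtain ⟨O, hO, rfl⟩ := isOpen_induced_iff.1 hV
    have : Disjoint (Subtype.val '' U) O := by
      rw [Set.disjoint_left]
      rintro _ ⟨x, hx, rfl⟩ hxO
      exact hUV.le_bot ⟨hx, hxO⟩
    refine (this.closure_left hO).mono_right ?_
    rintro _ ⟨x, hx, rfl⟩
    exact hx
  have hUneg : Disjoint (closure (Subtype.val '' U)) (negFace k) := by
    have hO : IsOpen {x : HilbertCube | (x k : ℝ) < -(1 / 2 : ℝ)} := isOpen_lt hc continuous_const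
    have : Disjoint (Subtype.val '' U) {x : HilbertCube | (x k : ℝ) < -(1 / 2 : ℝ)} := by
      rw [Set.disjoint_left]
      rintro _ ⟨x, hx, rfl⟩ hxO
      exact hUV.le_bot ⟨hx, hB (show (x.1 k : ℝ) ≤ -(1 / 2 : ℝ) from le_of_lt hxO)⟩
    refine (this.closure_left hO).mono_right ?_
    intro x hx
    simp only [negFace, mem_ofPred_eq] at hx ⊢
    rw [hx]; norm_num
  have hVpos : Disjoint (closure (Subtype.val '' V)) (posFace k) := by
    have hO : IsOpen {x : HilbertCube | (1 / 2 : ℝ) < (x k : ℝ)} := isOpen_lt continuous_const hc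
    have : Disjoint (Subtype.val '' V) {x : HilbertCube | (1 / 2 : ℝ) < (x k : ℝ)} := by
      rw [Set.disjoint_left]
      rintro _ ⟨x, hx, rfl⟩ hxO
      exact hUV.le_bot ⟨hA (show (1 / 2 : ℝ) ≤ (x.1 k : ℝ) from le_of_lt hxO), hx⟩
    refine (this.closure_left hO).mono_right ?_
    intro x hx
    simp only [posFace, mem_ofPred_eq] at hx ⊢
    rw [hx]; norm_num
  have h1 : Disjoint (closure (Subtype.val '' U ∪ posFace k)) (Subtype.val '' V ∪ negFace k) := by
    rw [closure_union, (isClosed_posFace k).closure_eq]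
    simp only [Set.disjoint_union_left, Set.disjoint_union_right]
    exact ⟨⟨half U V hV hUV, (hVpos.mono_left subset_closure).symm⟩,
      ⟨hUneg, disjoint_faces k⟩⟩
  have h2 : Disjoint (Subtype.val '' U ∪ posFace k) (closure (Subtype.val '' V ∪ negFace k)) := by
    rw [closure_union, (isClosed_negFace k).closure_eq]
    simp only [Set.disjoint_union_left, Set.disjoint_union_right]
    exact ⟨⟨(half V U hU hUV.symm).symm, hVpos.symm⟩,
      ⟨hUneg.mono_left subset_closure, disjoint_faces k⟩⟩
  obtain ⟨U', V', hU', hV', hs, ht, hd⟩ :=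
    separatedNhds_iff_disjoint.2 (CompletelyNormalSpace.completely_normal h1 h2)
  exact ⟨U', V', hU', hV', hd, subset_union_right.trans hs, subset_union_right.trans ht,
    fun x hx => hs (Or.inl ⟨x, hx, rfl⟩), fun x hx => ht (Or.inl ⟨x, hx, rfl⟩)⟩

end HCProof

/-- If `S ⊆ Q` meets every continuum from the face `W_1^+` to the face
`W_1^-`, then `S` with the subspace topology is strongly infinite dimensional. -/
theorem stronglyInfiniteDimensional_of_meets_every_continuum_between_faces
    (S : Set HilbertCube)
    (hS : ∀ C : Set HilbertCube, IsCompact C → IsConnected C →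
      (C ∩ posFace 0).Nonempty → (C ∩ negFace 0).Nonempty → (S ∩ C).Nonempty) :
    StronglyInfiniteDimensional S := by
  have hc : ∀ k, Continuous fun x : S => (x.1 k : ℝ) := fun k =>
    continuous_subtype_val.comp ((continuous_apply k).comp continuous_subtype_val)
  refine ⟨fun n => {x : S | (1 / 2 : ℝ) ≤ (x.1 (n + 1) : ℝ)},
    fun n => {x : S | (x.1 (n + 1) : ℝ) ≤ -(1 / 2 : ℝ)}, fun n => ⟨?_, ?_, ?_⟩, ?_⟩
  · exact isClosed_le continuous_const (hc _)
  · exact isClosed_le (hc _) continuous_const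
  · rw [Set.disjoint_left]
    intro x h1 h2
    simp only [mem_ofPred_eq] at h1 h2
    linarith
  intro L hL
  choose hLc U V hU hV hUV hA hB hLUV using hL
  choose U' V' hU' hV' hUV' hp hm hUU hVV using fun n =>
    HCProof.extend_sep S (n + 1) (U n) (V n) (hU n) (hV n) (hUV n) (hA n) (hB n)
  set K : Set HilbertCube := ⋂ n, (U' n ∪ V' n)ᶜ with hK
  have hKc : IsClosed K := isClosed_iInter fun n => ((hU' n).union (hV' n)).isClosed_compl
  have hKS : ∀ x : S, x.1 ∈ K → x ∈ ⋂ n, L n := by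
    intro x hx
    refine mem_iInter.2 fun n => ?_
    by_contra hxL
    have h1 : x ∈ U n ∪ V n := by rw [← hLUV n]; exact hxL
    apply mem_iInter.1 hx n
    rcases h1 with h | h
    · exact Or.inl (hUU n x h)
    · exact Or.inr (hVV n x h)
  by_cases hcase : ∃ C ⊆ K, IsCompact C ∧ IsConnected C ∧
      (C ∩ posFace 0).Nonempty ∧ (C ∩ negFace 0).Nonempty
  · obtain ⟨C, hCK, h1, h2, h3, h4⟩ := hcase
    obtain ⟨x, hxS, hxC⟩ := hS C h1 h2 h3 h4
    exact ⟨⟨x, hxS⟩, hKS ⟨x, hxS⟩ (hCK hxC)⟩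
  exfalso
  have : CompactSpace K := isCompact_iff_compactSpace.1 hKc.isCompact
  obtain ⟨C, hC, hAC, hCB⟩ := HCProof.clopen_or_continuum
    (Subtype.val ⁻¹' posFace 0 : Set K) (Subtype.val ⁻¹' negFace 0)
    ((HCProof.isClosed_posFace 0).preimage continuous_subtype_val)
    ((HCProof.isClosed_negFace 0).preimage continuous_subtype_val) (by
      intro a ha
      rw [Set.disjoint_left]
      intro b hb hb'
      apply hcase
      refine ⟨Subtype.val '' connectedComponent a, ?_, ?_, ?_, ?_, ?_⟩
      · rintro _ ⟨x, _, rfl⟩; exact x.2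
      · exact isClosed_connectedComponent.isCompact.image continuous_subtype_val
      · exact isConnected_connectedComponent.image _ continuous_subtype_val.continuousOn
      · exact ⟨a, ⟨a, mem_connectedComponent, rfl⟩, ha⟩
      · exact ⟨b, ⟨b, hb, rfl⟩, hb'⟩)
  have hemb : ∀ F : Set K, IsClosed F → IsClosed (Subtype.val '' F) := fun F hF =>
    hKc.isClosedEmbedding_subtypeVal.isClosedMap F hF
  have hdisj : Disjoint (Subtype.val '' C ∪ posFace 0) (Subtype.val '' Cᶜ ∪ negFace 0) := by
    simp only [Set.disjoint_union_left, Set.disjoint_union_right]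
    refine ⟨⟨?_, ?_⟩, ⟨?_, HCProof.disjoint_faces 0⟩⟩
    · exact (Set.disjoint_image_iff Subtype.val_injective).2 disjoint_compl_right
    · rw [Set.disjoint_right]
      rintro _ ⟨x, hx, rfl⟩ h
      exact hx (hAC h)
    · rw [Set.disjoint_left]
      rintro _ ⟨x, hx, rfl⟩ h
      exact hCB.le_bot ⟨hx, h⟩
  obtain ⟨U0, V0, hU0, hV0, hs, ht, hd⟩ := normal_separation
    ((hemb C hC.1).union (HCProof.isClosed_posFace 0))
    ((hemb Cᶜ hC.compl.1).union (HCProof.isClosed_negFace 0)) hdisj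
  obtain ⟨x, hx⟩ := HCProof.hilbert_cube (fun n => Nat.casesOn n U0 U') (fun n => Nat.casesOn n V0 V')
    (by rintro (_ | n) <;> simp [hU0, hU']) (by rintro (_ | n) <;> simp [hV0, hV'])
    (by rintro (_ | n); exacts [hd, hUV' n])
    (by rintro (_ | n); exacts [subset_union_right.trans hs, hp n])
    (by rintro (_ | n); exacts [subset_union_right.trans ht, hm n])
  have hxK : x ∈ K := by
    refine mem_iInter.2 fun n => ?_
    rintro (h | h)
    · exact (hx (n + 1)).1 h
    · exact (hx (n + 1)).2 h
  by_cases hxC : (⟨x, hxK⟩ : K) ∈ C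
  · exact (hx 0).1 (hs (Or.inl ⟨⟨x, hxK⟩, hxC, rfl⟩))
  · exact (hx 0).2 (ht (Or.inl ⟨⟨x, hxK⟩, hxC, rfl⟩))
end

section
/- For any two distinct points x, y of the Hilbert cube Q, the complement Q \ (W_1^- ∪ W_1^+) of the union of the two opposite faces W_1^- and W_1^+ is homeomorphic to the complement Q \ {x, y}. -/
open Set

lemma exists_psi (l r u v : ℝ) (h1 : l < u) (h2 : l < v) (h3 : u < r) (h4 : v < r) :
    ∃ ψ : ℝ → ℝ, Continuous ψ ∧ StrictMono ψ ∧ ψ u = v ∧ ∀ s, (s ≤ l ∨ r ≤ s) → ψ s = s := by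
  have hu : 0 < u - l := by linarith
  have hv : 0 < v - l := by linarith
  have hu' : 0 < r - u := by linarith
  have hv' : 0 < r - v := by linarith
  obtain ⟨p, hp⟩ : ∃ p, p = (v - l) / (u - l) := ⟨_, rfl⟩
  obtain ⟨q, hq⟩ : ∃ q, q = (r - v) / (r - u) := ⟨_, rfl⟩
  have hp0 : 0 < p := by rw [hp]; positivity
  have hq0 : 0 < q := by rw [hq]; positivity
  have hpe : p * (u - l) = v - l := by rw [hp]; field_simp
  have hqe : q * (r - u) = r - v := by rw [hq]; field_simp
  have m1 : StrictMono (fun s : ℝ => l + p * (s - l)) := by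
    intro a b hab; simp only; nlinarith
  have m2 : StrictMono (fun s : ℝ => r + q * (s - r)) := by
    intro a b hab; simp only; nlinarith
  rcases le_total v u with h | h
  · have hp1 : p ≤ 1 := by rw [hp, div_le_one hu]; linarith
    have hq1 : 1 ≤ q := by rw [hq, one_le_div hu']; linarith
    refine ⟨fun s => min s (max (l + p * (s - l)) (r + q * (s - r))), by fun_prop,
      fun a b hab => min_lt_min hab (max_lt_max (m1 hab) (m2 hab)), ?_, ?_⟩
    · have e1 : l + p * (u - l) = v := by linarith
      have e2 : r + q * (u - r) = v := by linarith
      simp only [e1, e2, max_self, min_eq_right h]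
    · rintro s (hs | hs)
      · exact min_eq_left (le_max_of_le_left (by nlinarith))
      · exact min_eq_left (le_max_of_le_right (by nlinarith))
  · have hp1 : 1 ≤ p := by rw [hp, one_le_div hu]; linarith
    have hq1 : q ≤ 1 := by rw [hq, div_le_one hu']; linarith
    refine ⟨fun s => max s (min (l + p * (s - l)) (r + q * (s - r))), by fun_prop,
      fun a b hab => max_lt_max hab (min_lt_min (m1 hab) (m2 hab)), ?_, ?_⟩
    · have e1 : l + p * (u - l) = v := by linarith
      have e2 : r + q * (u - r) = v := by linarith
      simp only [e1, e2, min_self, max_eq_right h]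
    · rintro s (hs | hs)
      · exact max_eq_left (min_le_of_left_le (by nlinarith))
      · exact max_eq_left (min_le_of_right_le (by nlinarith))

lemma exists_shear_homeo (g : ℝ → ℝ → ℝ) (hc : Continuous fun p : ℝ × ℝ => g p.1 p.2)
    (hm : ∀ t, StrictMono (g t)) (hs : ∀ t, Function.Surjective (g t)) :
    ∃ h : ℝ × ℝ ≃ₜ ℝ × ℝ, ∀ p, h p = (p.1, g p.1 p.2) := by
  choose f hf using hs
  have key : Continuous fun p : ℝ × ℝ => f p.1 p.2 := by
    rw [OrderTopology.continuous_iff]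
    intro a
    constructor
    · have : (fun p : ℝ × ℝ => f p.1 p.2) ⁻¹' Ioi a = {p : ℝ × ℝ | g p.1 a < p.2} := by
        ext p
        simp only [mem_preimage, mem_Ioi, mem_ofPred_eq]
        rw [← (hm p.1).lt_iff_lt, hf]
      rw [this]
      exact isOpen_lt (hc.comp (continuous_fst.prodMk continuous_const)) continuous_snd
    · have : (fun p : ℝ × ℝ => f p.1 p.2) ⁻¹' Iio a = {p : ℝ × ℝ | p.2 < g p.1 a} := by
        ext p
        simp only [mem_preimage, mem_Iio, mem_ofPred_eq]
        rw [← (hm p.1).lt_iff_lt, hf]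
      rw [this]
      exact isOpen_lt continuous_snd (hc.comp (continuous_fst.prodMk continuous_const))
  refine ⟨{ toFun := fun p => (p.1, g p.1 p.2), invFun := fun p => (p.1, f p.1 p.2),
            left_inv := ?_, right_inv := ?_,
            continuous_toFun := continuous_fst.prodMk hc,
            continuous_invFun := continuous_fst.prodMk key }, fun p => rfl⟩
  · intro p
    exact Prod.ext rfl ((hm p.1).injective (hf _ _))
  · intro p
    exact Prod.ext rfl (hf _ _)

lemma exists_shear (l r u v t0 t1 : ℝ) (h1 : l < u) (h2 : l < v) (h3 : u < r) (h4 : v < r)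
    (ht : t0 < t1) : ∃ (ψ : ℝ → ℝ) (h : ℝ × ℝ ≃ₜ ℝ × ℝ), StrictMono ψ ∧ ψ u = v ∧
      (∀ s, (s ≤ l ∨ r ≤ s) → ψ s = s) ∧ (∀ p, (h p).1 = p.1) ∧
      (∀ p : ℝ × ℝ, (t1 ≤ p.1 ∨ p.2 ≤ l ∨ r ≤ p.2) → h p = p) ∧
      (∀ p : ℝ × ℝ, p.1 ≤ t0 → h p = (p.1, ψ p.2)) ∧
      (∀ p : ℝ × ℝ, l < p.2 → l < (h p).2) ∧ (∀ p : ℝ × ℝ, p.2 < r → (h p).2 < r) := by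
  obtain ⟨ψ, hc, hm, huv, hid⟩ := exists_psi l r u v h1 h2 h3 h4
  have hd : 0 < t1 - t0 := by linarith
  let lam : ℝ → ℝ := fun t => max 0 (min 1 ((t1 - t) / (t1 - t0)))
  have lamc : Continuous lam := by fun_prop
  have lam0 : ∀ t, 0 ≤ lam t := fun t => le_max_left _ _
  have lam1 : ∀ t, lam t ≤ 1 := fun t => max_le (by norm_num) (min_le_left _ _)
  have lamhi : ∀ t, t1 ≤ t → lam t = 0 := fun t h => by
    refine max_eq_left (min_le_of_right_le ?_)
    exact div_nonpos_of_nonpos_of_nonneg (by linarith) hd.le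
  have lamlo : ∀ t, t ≤ t0 → lam t = 1 := fun t h => by
    have : 1 ≤ (t1 - t) / (t1 - t0) := by rw [one_le_div hd]; linarith
    simp only [lam, min_eq_left this]; norm_num
  let g : ℝ → ℝ → ℝ := fun t s => (1 - lam t) * s + lam t * ψ s
  have gm : ∀ t, StrictMono (g t) := by
    intro t a b hab
    have hψ := hm hab
    simp only [g]
    rcases (lam0 t).eq_or_lt with h | h
    · rw [← h]; linarith
    · have := lam1 t
      nlinarith [mul_pos h (sub_pos.2 hψ), mul_nonneg (sub_nonneg.2 this) (sub_pos.2 hab).le]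
  have gid : ∀ t s, (s ≤ l ∨ r ≤ s) → g t s = s := by
    intro t s h; simp only [g, hid s h]; ring
  have gc : Continuous fun p : ℝ × ℝ => g p.1 p.2 := by fun_prop
  have gs : ∀ t, Function.Surjective (g t) := by
    intro t y
    by_cases hy : y ≤ l ∨ r ≤ y
    · exact ⟨y, gid t y hy⟩
    · push Not at hy
      have hlr : l ≤ r := by linarith
      have := intermediate_value_Icc hlr (f := g t)
        (gc.comp (Continuous.prodMk_right t)).continuousOn
      rw [gid t l (Or.inl le_rfl), gid t r (Or.inr le_rfl)] at this
      obtain ⟨x, -, hx⟩ := this ⟨hy.1.le, hy.2.le⟩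
      exact ⟨x, hx⟩
  obtain ⟨h, hh⟩ := exists_shear_homeo g gc gm gs
  refine ⟨ψ, h, hm, huv, hid, fun p => by rw [hh], ?_, ?_, ?_, ?_⟩
  · rintro p (hp | hp)
    · rw [hh]; simp [g, lamhi _ hp]
    · rw [hh, gid _ _ hp]
  · intro p hp
    rw [hh]; simp [g, lamlo _ hp]
  · intro p hp
    rw [hh]
    have := gm p.1 hp
    rwa [gid p.1 l (Or.inl le_rfl)] at this
  · intro p hp
    rw [hh]
    have := gm p.1 hp
    rwa [gid p.1 r (Or.inr le_rfl)] at this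

/-- L-shaped coordinates at the lower left corner. -/
def Lhomeo : ℝ × ℝ ≃ₜ ℝ × ℝ where
  toFun p := (min p.1 p.2, p.1 - p.2)
  invFun p := (p.1 + max p.2 0, p.1 + max (-p.2) 0)
  left_inv p := by
    rcases le_total p.1 p.2 with h | h
    · ext <;> simp [h]
    · ext <;> simp [h]
  right_inv p := by
    rcases le_total 0 p.2 with h | h
    · ext <;> simp [h]
    · ext <;> simp [h]
  continuous_toFun := by fun_prop
  continuous_invFun := by fun_prop

def Sq : Set (ℝ × ℝ) := Icc (-1) 1 ×ˢ Icc (-1) 1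

structure Good (T : ℝ) (k : ℝ × ℝ ≃ₜ ℝ × ℝ) : Prop where
  sq : ∀ p, k p ∈ Sq ↔ p ∈ Sq
  fix : ∀ p : ℝ × ℝ, T ≤ p.1 → k p = p

lemma Good.trans {T : ℝ} {k k' : ℝ × ℝ ≃ₜ ℝ × ℝ} (h : Good T k) (h' : Good T k') :
    Good T (k.trans k') where
  sq p := by simp [h.sq, h'.sq]
  fix p hp := by simp [h.fix p hp, h'.fix p hp]

/-- reflection in the second coordinate -/
def rfl2 : ℝ × ℝ ≃ₜ ℝ × ℝ := (Homeomorph.refl ℝ).prodCongr (Homeomorph.neg ℝ)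

lemma rfl2_apply (p : ℝ × ℝ) : rfl2 p = (p.1, -p.2) := rfl

lemma rfl2_rfl2 (p : ℝ × ℝ) : rfl2 (rfl2 p) = p := by simp [rfl2_apply]

lemma rfl2_Sq (p : ℝ × ℝ) : rfl2 p ∈ Sq ↔ p ∈ Sq := by
  simp only [rfl2_apply, Sq, mem_prod, mem_Icc]
  constructor <;> rintro ⟨⟨_, _⟩, ⟨_, _⟩⟩ <;> refine ⟨⟨?_, ?_⟩, ⟨?_, ?_⟩⟩ <;> linarith

lemma Good.conj {T : ℝ} {k : ℝ × ℝ ≃ₜ ℝ × ℝ} (h : Good T k) :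
    Good T ((rfl2.trans k).trans rfl2) where
  sq p := by simp [rfl2_Sq, h.sq]
  fix p hp := by
    have : k (rfl2 p) = rfl2 p := h.fix _ hp
    simp [this, rfl2_rfl2]

lemma L_lemma (T u v : ℝ) (hT : T ≤ 1) (hT' : -1 < T) (hu : -2 < u) (hv : -2 < v) (hu' : u < T + 1)
    (hv' : v < T + 1) : ∃ (ψ : ℝ → ℝ) (k : ℝ × ℝ ≃ₜ ℝ × ℝ), Good T k ∧ StrictMono ψ ∧ ψ u = v ∧
      ψ (-2) = -2 ∧ ∀ s, k (-1 + max s 0, -1 + max (-s) 0) =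
        (-1 + max (ψ s) 0, -1 + max (-ψ s) 0) := by
  obtain ⟨l, hl⟩ : ∃ l, l = (-2 + min u v) / 2 := ⟨_, rfl⟩
  obtain ⟨r, hr⟩ : ∃ r, r = (T + 1 + max (max u v) 0) / 2 := ⟨_, rfl⟩
  obtain ⟨t1, ht1⟩ : ∃ t, t = min (T - r) (1 + l) := ⟨_, rfl⟩
  have a1 : -2 < min u v := lt_min hu hv
  have a2 : max (max u v) 0 < T + 1 := max_lt (max_lt hu' hv') (by linarith)
  have a3 : min u v ≤ u := min_le_left _ _
  have a4 : min u v ≤ v := min_le_right _ _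
  have a5 : u ≤ max (max u v) 0 := le_max_of_le_left (le_max_left _ _)
  have a6 : v ≤ max (max u v) 0 := le_max_of_le_left (le_max_right _ _)
  have a7 : 0 ≤ max (max u v) 0 := le_max_right _ _
  have b1 : t1 ≤ T - r := ht1 ▸ min_le_left _ _
  have b2 : t1 ≤ 1 + l := ht1 ▸ min_le_right _ _
  have b3 : -1 < t1 := by rw [ht1]; exact lt_min (by linarith) (by linarith)
  obtain ⟨ψ, h, hm, huv, hid, hfst, hfix, hlo, hgl, hgr⟩ :=
    exists_shear l r u v (-1) t1 (by linarith) (by linarith) (by linarith) (by linarith) b3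
  have case : ∀ p : ℝ × ℝ, h p = p ∨ ((h p).1 = p.1 ∧ p.1 < t1 ∧ l < p.2 ∧ p.2 < r ∧
      l < (h p).2 ∧ (h p).2 < r) := by
    intro p
    by_cases hp : t1 ≤ p.1 ∨ p.2 ≤ l ∨ r ≤ p.2
    · exact Or.inl (hfix p hp)
    · push Not at hp
      exact Or.inr ⟨hfst p, hp.1, hp.2.1, hp.2.2, hgl p hp.2.1, hgr p hp.2.2⟩
  have Lsq : ∀ p : ℝ × ℝ, p.1 < t1 → l < p.2 → p.2 < r → (Lhomeo.symm p ∈ Sq ↔ -1 ≤ p.1) := by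
    intro p h1 h2 h3
    have : Lhomeo.symm p = (p.1 + max p.2 0, p.1 + max (-p.2) 0) := rfl
    rw [this]
    simp only [Sq, mem_prod, mem_Icc]
    rcases le_total 0 p.2 with h | h
    · rw [max_eq_left h, max_eq_right (by linarith : -p.2 ≤ 0)]
      constructor
      · rintro ⟨⟨_, _⟩, ⟨_, _⟩⟩; linarith
      · intro; refine ⟨⟨?_, ?_⟩, ⟨?_, ?_⟩⟩ <;> linarith
    · rw [max_eq_right h, max_eq_left (by linarith : 0 ≤ -p.2)]
      constructor
      · rintro ⟨⟨_, _⟩, ⟨_, _⟩⟩; linarith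
      · intro; refine ⟨⟨?_, ?_⟩, ⟨?_, ?_⟩⟩ <;> linarith
  refine ⟨ψ, (Lhomeo.trans h).trans Lhomeo.symm, ⟨?_, ?_⟩, hm, huv, hid _ (Or.inl (by linarith)), ?_⟩
  · intro p
    simp only [Homeomorph.trans_apply]
    rcases case (Lhomeo p) with h1 | ⟨h1, h2, h3, h4, h5, h6⟩
    · rw [h1]; simp
    · rw [Lsq _ (by rw [h1]; exact h2) h5 h6, h1, ← Lsq _ h2 h3 h4]; simp
  · intro p hp
    simp only [Homeomorph.trans_apply]
    rcases case (Lhomeo p) with h1 | ⟨h1, h2, h3, h4, h5, h6⟩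
    · rw [h1]; simp
    · exfalso
      have e1 : (Lhomeo p).1 = min p.1 p.2 := rfl
      have e2 : (Lhomeo p).2 = p.1 - p.2 := rfl
      rw [e1] at h2; rw [e2] at h4
      rcases min_lt_iff.1 h2 with h | h <;> linarith
  · intro s
    have : ((-1 : ℝ) + max s 0, (-1 : ℝ) + max (-s) 0) = Lhomeo.symm (-1, s) := rfl
    rw [this]
    simp only [Homeomorph.trans_apply, Homeomorph.apply_symm_apply]
    rw [hlo _ le_rfl]; rfl

lemma W_lemma (T s : ℝ) (hT : T ≤ 1) (hT' : -1 < T) (hs : -2 < s) (hs' : s < T + 1)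
    (O : Set (ℝ × ℝ)) (hO : IsOpen O) (hw : (-1 + max s 0, 1 - max (-s) 0) ∈ O)
    (τ : ℝ) (hτ : -1 < τ) :
    ∃ (k : ℝ × ℝ ≃ₜ ℝ × ℝ) (t' : ℝ), Good T k ∧ -1 < t' ∧ t' ≤ τ ∧
      k (-1, 1) = (-1 + max s 0, 1 - max (-s) 0) ∧ ∀ p ∈ Sq, p.1 < t' → k p ∈ O := by
  obtain ⟨ψ, b, hb, hm, h0, -, hbL⟩ := L_lemma T 0 s hT hT' (by norm_num) hs (by linarith) hs'
  let β := (rfl2.trans b).trans rfl2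
  have hβ : Good T β := hb.conj
  have hβw : β (-1, 1) = (-1 + max s 0, 1 - max (-s) 0) := by
    have := hbL 0
    simp only [h0, neg_zero, max_self, add_zero] at this
    simp only [β, Homeomorph.trans_apply, rfl2_apply, this]
    ext <;> simp; ring
  have hO' : IsOpen (β ⁻¹' O) := hO.preimage β.continuous
  obtain ⟨ε, hε, hball⟩ := Metric.isOpen_iff.1 hO' (-1, 1) (by simpa [mem_preimage, hβw] using hw)
  obtain ⟨e, he⟩ : ∃ e, e = min (ε / 2) 1 := ⟨_, rfl⟩
  have e0 : 0 < e := by rw [he]; positivity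
  have e1 : e ≤ 1 := he ▸ min_le_right _ _
  have e2 : e ≤ ε / 2 := he ▸ min_le_left _ _
  obtain ⟨φ, α, hα, hφ, hφ0, hφ2, hαL⟩ := L_lemma T 0 (-2 + e) hT hT' (by norm_num) (by linarith)
    (by linarith) (by linarith)
  have hαe : ∀ c ∈ Icc (-1 : ℝ) 1, α (-1, c) = (-1, -1 - φ (-(c + 1))) ∧ -2 ≤ φ (-(c+1)) ∧
      φ (-(c+1)) ≤ -2 + e := by
    intro c hc
    have h1 : φ (-(c+1)) ≤ -2 + e := by
      rw [← hφ0]; exact hφ.monotone (by linarith [hc.1])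
    have h2 : -2 ≤ φ (-(c+1)) := by
      rw [← hφ2]; exact hφ.monotone (by linarith [hc.2, hφ2])
    have := hαL (-(c+1))
    rw [max_eq_right (by linarith [hc.1] : -(c+1) ≤ 0),
      max_eq_left (by linarith [hc.1] : 0 ≤ -(-(c+1))),
      max_eq_right (by linarith : φ (-(c+1)) ≤ 0), max_eq_left (by linarith : 0 ≤ -φ (-(c+1)))] at this
    refine ⟨?_, h2, h1⟩
    convert this using 2 <;> ring_nf
  have hsub : ({-1} : Set ℝ) ×ˢ Icc (-1 : ℝ) 1 ⊆ (α.trans β) ⁻¹' O := by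
    rintro ⟨a, c⟩ ⟨ha, hc⟩
    simp only [mem_singleton_iff] at ha
    subst ha
    obtain ⟨h1, h2, h3⟩ := hαe c hc
    have : α (-1, c) ∈ β ⁻¹' O := by
      apply hball
      rw [h1, Metric.mem_ball, Prod.dist_eq]
      simp only [dist_self, Real.dist_eq]
      refine max_lt hε ?_
      rw [abs_lt]; constructor <;> linarith
    exact this
  obtain ⟨U, V, hU, hV, hU1, hV1, hUV⟩ := generalized_tube_lemma isCompact_singleton isCompact_Icc
    (hO.preimage (α.trans β).continuous) hsub
  obtain ⟨d, hd, hdU⟩ := Metric.isOpen_iff.1 hU (-1) (hU1 rfl)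
  refine ⟨α.trans β, min τ (-1 + d), hα.trans hβ, lt_min hτ (by linarith), min_le_left _ _, ?_, ?_⟩
  · have := (hαe 1 (by norm_num)).1
    rw [Homeomorph.trans_apply, this, ← hβw]
    norm_num [hφ2]
  · intro p hp hlt
    refine hUV (⟨hdU ?_, hV1 hp.2⟩ : p ∈ U ×ˢ V)
    have h1 := hp.1.1
    have h2 := hlt.trans_le (min_le_right _ _)
    rw [Metric.mem_ball, Real.dist_eq, abs_lt]
    constructor <;> linarith

/-- Conclusion of the planar lemmas. -/
def Plan (T τ : ℝ) (z : ℝ × ℝ) (O : Set (ℝ × ℝ)) : Prop :=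
  ∃ (k : ℝ × ℝ ≃ₜ ℝ × ℝ) (t' : ℝ), Good T k ∧ -1 < t' ∧ t' ≤ τ ∧
      (∃ p ∈ Sq, p.1 < t' ∧ k p = z) ∧ ∀ p ∈ Sq, p.1 < t' → k p ∈ O

lemma Plan.conj {T τ : ℝ} {z : ℝ × ℝ} {O : Set (ℝ × ℝ)} (h : Plan T τ (rfl2 z) (rfl2 ⁻¹' O)) :
    Plan T τ z O := by
  obtain ⟨k, t', hk, h1, h2, ⟨p, hp, hpt, hpz⟩, h3⟩ := h
  refine ⟨_, t', hk.conj, h1, h2, ⟨rfl2 p, (rfl2_Sq p).2 hp, hpt, ?_⟩, ?_⟩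
  · simp [rfl2_rfl2, hpz]
  · intro p hp hpt
    exact h3 (rfl2 p) ((rfl2_Sq p).2 hp) hpt

lemma P_aux (T τ : ℝ) (hT : T ≤ 1) (hT' : -1 < T) (hτ : -1 < τ) (z : ℝ × ℝ) (hz : z ∈ Sq)
    (hzT : z.1 < T) (hz2 : -1 < z.2) (ε : ℝ) (hε : 0 < ε) :
    Plan T τ z {p | |p.2 - z.2| < ε} := by
  have hO : IsOpen {p : ℝ × ℝ | |p.2 - z.2| < ε} := isOpen_lt (by fun_prop) (by fun_prop)
  have hz21 : z.2 ≤ 1 := hz.2.2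
  have hw : ((-1 : ℝ) + max (z.2 - 1) 0, 1 - max (-(z.2 - 1)) 0) = (-1, z.2) := by
    rw [max_eq_right (by linarith), max_eq_left (by linarith)]; ext <;> simp
  obtain ⟨k, t', hk, h1, h2, h3, h4⟩ := W_lemma T (z.2 - 1) hT hT' (by linarith) (by linarith) _ hO
    (by rw [hw]; simpa using hε) τ hτ
  rw [hw] at h3
  have hcor : ((-1 : ℝ), (1 : ℝ)) ∈ Sq := by simp [Sq]
  rcases hz.1.1.eq_or_lt with hz1 | hz1
  · exact ⟨k, t', hk, h1, h2, ⟨(-1, 1), hcor, h1, by rw [h3, hz1]⟩, h4⟩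
  -- pick a point near w
  have hN : IsOpen ((fun a : ℝ => (k.symm (a, z.2)).1) ⁻¹' Iio t') :=
    isOpen_Iio.preimage (by fun_prop)
  obtain ⟨d, hd, hdN⟩ := Metric.isOpen_iff.1 hN (-1) (by
    rw [mem_preimage, ← h3]; simpa using h1)
  obtain ⟨a, ha⟩ : ∃ a, a = min (-1 + d / 2) z.1 := ⟨_, rfl⟩
  have a1 : -1 < a := by rw [ha]; exact lt_min (by linarith) hz1
  have a2 : a ≤ -1 + d / 2 := ha ▸ min_le_left _ _
  have a3 : a ≤ z.1 := ha ▸ min_le_right _ _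
  have aN : (k.symm (a, z.2)).1 < t' := by
    apply hdN
    rw [Metric.mem_ball, Real.dist_eq, abs_lt]; constructor <;> linarith
  obtain ⟨ψ, g, hm, hψ, hid, hfst, hfix, hlo, hgl, hgr⟩ := exists_shear (-1) T a z.1 1 2 a1 hz1
    (by linarith) hzT (by norm_num)
  let sw : ℝ × ℝ ≃ₜ ℝ × ℝ := Homeomorph.prodComm ℝ ℝ
  let γ := (sw.trans g).trans sw
  have γe : ∀ p : ℝ × ℝ, γ p = ((g (p.2, p.1)).2, p.2) := fun p => Prod.ext rfl (hfst _)
  have hγ : Good T γ := by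
    constructor
    · intro p
      rw [γe]
      by_cases hp : p.1 ≤ -1 ∨ T ≤ p.1
      · rw [hfix _ (Or.inr hp)]
      · push Not at hp
        have q1 := hgl (p.2, p.1) hp.1
        have q2 := hgr (p.2, p.1) hp.2
        simp only [Sq, mem_prod, mem_Icc]
        constructor <;> rintro ⟨-, h⟩ <;> refine ⟨⟨?_, ?_⟩, h⟩ <;> linarith
    · intro p hp
      rw [γe, hfix _ (Or.inr (Or.inr hp))]
  refine ⟨k.trans γ, t', hk.trans hγ, h1, h2, ⟨k.symm (a, z.2), ?_, aN, ?_⟩, ?_⟩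
  · rw [← hk.sq]
    simp only [Homeomorph.apply_symm_apply]
    exact ⟨⟨a1.le, a3.trans hz.1.2⟩, hz.2⟩
  · rw [Homeomorph.trans_apply, Homeomorph.apply_symm_apply, γe, hlo _ hz.2.2]
    simp [hψ]
  · intro p hp hpt
    have := h4 p hp hpt
    rw [Homeomorph.trans_apply, γe]
    exact this

lemma P0_aux (T τ : ℝ) (hT : T ≤ 1) (hT' : -1 < T) (hτ : -1 < τ) (z : ℝ × ℝ) (hz : z ∈ Sq)
    (hzT : z.1 < T) (hz2 : -1 < z.2) (ε : ℝ) (hε : 0 < ε) :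
    Plan T τ z {p | |p.1 - z.1| < ε} := by
  have hO : IsOpen {p : ℝ × ℝ | |p.1 - z.1| < ε} := isOpen_lt (by fun_prop) (by fun_prop)
  have hz11 : -1 ≤ z.1 := hz.1.1
  have hw : ((-1 : ℝ) + max (z.1 + 1) 0, 1 - max (-(z.1 + 1)) 0) = (z.1, 1) := by
    rw [max_eq_left (by linarith), max_eq_right (by linarith)]; ext <;> simp
  obtain ⟨k, t', hk, h1, h2, h3, h4⟩ := W_lemma T (z.1 + 1) hT hT' (by linarith) (by linarith) _ hO
    (by rw [hw]; simpa using hε) τ hτ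
  rw [hw] at h3
  have hcor : ((-1 : ℝ), (1 : ℝ)) ∈ Sq := by simp [Sq]
  rcases hz.2.2.eq_or_lt with hz1 | hz1
  · exact ⟨k, t', hk, h1, h2, ⟨(-1, 1), hcor, h1, by rw [h3, ← hz1]⟩, h4⟩
  have hN : IsOpen ((fun a : ℝ => (k.symm (z.1, a)).1) ⁻¹' Iio t') :=
    isOpen_Iio.preimage (by fun_prop)
  obtain ⟨d, hd, hdN⟩ := Metric.isOpen_iff.1 hN 1 (by
    rw [mem_preimage, ← h3]; simpa using h1)
  obtain ⟨a, ha⟩ : ∃ a, a = max (1 - d / 2) z.2 := ⟨_, rfl⟩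
  have a1 : a < 1 := by rw [ha]; exact max_lt (by linarith) hz1
  have a2 : 1 - d / 2 ≤ a := ha ▸ le_max_left _ _
  have a3 : z.2 ≤ a := ha ▸ le_max_right _ _
  have aN : (k.symm (z.1, a)).1 < t' := by
    apply hdN
    rw [Metric.mem_ball, Real.dist_eq, abs_lt]; constructor <;> linarith
  obtain ⟨ψ, γ, hm, hψ, hid, hfst, hfix, hlo, hgl, hgr⟩ := exists_shear (-1) 1 a z.2 z.1 T
    (by linarith) hz2 a1 hz1 hzT
  have hγ : Good T γ := by
    constructor
    · intro p
      by_cases hp : p.2 ≤ -1 ∨ 1 ≤ p.2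
      · rw [hfix _ (Or.inr hp)]
      · push Not at hp
        have q1 := hgl p hp.1
        have q2 := hgr p hp.2
        simp only [Sq, mem_prod, mem_Icc, hfst]
        constructor <;> rintro ⟨h, -⟩ <;> refine ⟨h, ⟨?_, ?_⟩⟩ <;> linarith
    · intro p hp
      rw [hfix _ (Or.inl hp)]
  refine ⟨k.trans γ, t', hk.trans hγ, h1, h2, ⟨k.symm (z.1, a), ?_, aN, ?_⟩, ?_⟩
  · rw [← hk.sq]
    simp only [Homeomorph.apply_symm_apply]
    exact ⟨hz.1, ⟨by linarith [hz.2.1], a1.le⟩⟩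
  · rw [Homeomorph.trans_apply, Homeomorph.apply_symm_apply, hlo (z.1, a) le_rfl]
    simp [hψ]
  · intro p hp hpt
    have := h4 p hp hpt
    simp only [Homeomorph.trans_apply, mem_ofPred_eq, hfst] at this ⊢
    exact this

lemma P_lemma (T τ : ℝ) (hT : T ≤ 1) (hT' : -1 < T) (hτ : -1 < τ) (z : ℝ × ℝ) (hz : z ∈ Sq)
    (hzT : z.1 < T) (ε : ℝ) (hε : 0 < ε) :
    Plan T τ z {p | |p.2 - z.2| < ε} := by
  by_cases h : -1 < z.2
  · exact P_aux T τ hT hT' hτ z hz hzT h ε hε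
  · apply Plan.conj
    have := P_aux T τ hT hT' hτ (rfl2 z) ((rfl2_Sq z).2 hz) hzT
      (by rw [rfl2_apply]; simp only; linarith) ε hε
    convert this using 1
    ext p
    simp only [mem_preimage, mem_ofPred_eq, rfl2_apply]
    rw [← abs_neg]; ring_nf

lemma P0_lemma (T τ : ℝ) (hT : T ≤ 1) (hT' : -1 < T) (hτ : -1 < τ) (z : ℝ × ℝ) (hz : z ∈ Sq)
    (hzT : z.1 < T) (ε : ℝ) (hε : 0 < ε) :
    Plan T τ z {p | |p.1 - z.1| < ε} := by
  by_cases h : -1 < z.2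
  · exact P0_aux T τ hT hT' hτ z hz hzT h ε hε
  · apply Plan.conj
    exact P0_aux T τ hT hT' hτ (rfl2 z) ((rfl2_Sq z).2 hz) hzT
      (by rw [rfl2_apply]; simp only; linarith) ε hε

/-- The pair of coordinates `0, j`. -/
def pr2 (j : ℕ) (q : HilbertCube) : ℝ × ℝ := ((q 0 : ℝ), (q j : ℝ))

lemma pr2_mem (j : ℕ) (q : HilbertCube) : pr2 j q ∈ Sq := ⟨(q 0).2, (q j).2⟩

/-- Action of a planar map on the coordinates `0, j`. -/
def liftFun (j : ℕ) (k : ℝ × ℝ → ℝ × ℝ) (hk : ∀ p, p ∈ Sq → k p ∈ Sq) (q : HilbertCube) :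
    HilbertCube := fun i =>
  if i = 0 then ⟨(k (pr2 j q)).1, (hk _ (pr2_mem j q)).1⟩
  else if i = j then ⟨(k (pr2 j q)).2, (hk _ (pr2_mem j q)).2⟩ else q i

lemma pr2_liftFun (j : ℕ) (hj : j ≠ 0) (k : ℝ × ℝ → ℝ × ℝ) (hk : ∀ p, p ∈ Sq → k p ∈ Sq)
    (q : HilbertCube) : pr2 j (liftFun j k hk q) = k (pr2 j q) := by
  ext <;> simp [pr2, liftFun, hj]

lemma liftFun_other (j : ℕ) (k : ℝ × ℝ → ℝ × ℝ) (hk : ∀ p, p ∈ Sq → k p ∈ Sq)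
    (q : HilbertCube) (i : ℕ) (h0 : i ≠ 0) (hj : i ≠ j) : liftFun j k hk q i = q i := by
  simp [liftFun, h0, hj]

lemma pr2_ext (j : ℕ) (q q' : HilbertCube) (h : pr2 j q = pr2 j q')
    (h' : ∀ i, i ≠ 0 → i ≠ j → q i = q' i) : q = q' := by
  have h1 := congrArg Prod.fst h
  have h2 := congrArg Prod.snd h
  funext i
  by_cases hi : i = 0
  · subst hi; exact Subtype.ext h1
  by_cases hij : i = j
  · subst hij; exact Subtype.ext h2
  exact h' i hi hij

lemma continuous_pr2 (j : ℕ) : Continuous (pr2 j) := by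
  unfold pr2; fun_prop

lemma continuous_liftFun (j : ℕ) (k : ℝ × ℝ → ℝ × ℝ) (hk : ∀ p, p ∈ Sq → k p ∈ Sq)
    (hc : Continuous k) : Continuous (liftFun j k hk) := by
  have := continuous_pr2 j
  refine continuous_pi fun i => ?_
  unfold liftFun
  split_ifs
  · exact Continuous.subtype_mk (by fun_prop) _
  · exact Continuous.subtype_mk (by fun_prop) _
  · fun_prop

lemma exists_lift (j : ℕ) (hj : j ≠ 0) (k : ℝ × ℝ ≃ₜ ℝ × ℝ) (hk : ∀ p, k p ∈ Sq ↔ p ∈ Sq) :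
    ∃ K : HilbertCube ≃ₜ HilbertCube, (∀ q, pr2 j (K q) = k (pr2 j q)) ∧
      ∀ q i, i ≠ 0 → i ≠ j → K q i = q i := by
  have h1 : ∀ p, p ∈ Sq → k p ∈ Sq := fun p hp => (hk p).2 hp
  have h2 : ∀ p, p ∈ Sq → k.symm p ∈ Sq := fun p hp => by
    rw [← hk]; simpa using hp
  refine ⟨{ toFun := liftFun j k h1, invFun := liftFun j k.symm h2, left_inv := ?_, right_inv := ?_
            continuous_toFun := continuous_liftFun _ _ _ k.continuous
            continuous_invFun := continuous_liftFun _ _ _ k.symm.continuous }, ?_, ?_⟩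
  · intro q
    refine pr2_ext j _ _ ?_ fun i hi hij => ?_
    · rw [pr2_liftFun j hj, pr2_liftFun j hj]; simp
    · rw [liftFun_other _ _ _ _ _ hi hij, liftFun_other _ _ _ _ _ hi hij]
  · intro q
    refine pr2_ext j _ _ ?_ fun i hi hij => ?_
    · rw [pr2_liftFun j hj, pr2_liftFun j hj]; simp
    · rw [liftFun_other _ _ _ _ _ hi hij, liftFun_other _ _ _ _ _ hi hij]
  · exact fun q => pr2_liftFun j hj k h1 q
  · exact fun q i hi hij => liftFun_other j k h1 q i hi hij

lemma lift_plan (j : ℕ) (hj : j ≠ 0) (T τ : ℝ) (z : HilbertCube) (O : Set (ℝ × ℝ))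
    (h : Plan T τ (pr2 j z) O) :
    ∃ (K : HilbertCube ≃ₜ HilbertCube) (t' : ℝ), -1 < t' ∧ t' ≤ τ ∧
      (∀ q, T ≤ (q 0 : ℝ) → K q = q) ∧ (∀ q i, i ≠ 0 → i ≠ j → K q i = q i) ∧
      ((K.symm z 0 : ℝ) < t') ∧ ∀ q, (q 0 : ℝ) < t' → pr2 j (K q) ∈ O := by
  obtain ⟨k, t', hk, h1, h2, ⟨p, hp, hpt, hpz⟩, h3⟩ := h
  obtain ⟨K, hK, hK'⟩ := exists_lift j hj k hk.sq
  refine ⟨K, t', h1, h2, ?_, hK', ?_, ?_⟩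
  · intro q hq
    exact pr2_ext j _ _ (by rw [hK, hk.fix _ hq]) (hK' q)
  · have := hK (K.symm z)
    rw [Homeomorph.apply_symm_apply, ← hpz] at this
    have := k.injective this
    have e : (K.symm z 0 : ℝ) = p.1 := by rw [this]; rfl
    rwa [e]
  · intro q hq
    rw [hK]
    exact h3 _ (pr2_mem j q) hq

lemma shrink_ind (m : ℕ) (T τ : ℝ) (hT : T ≤ 1) (hT' : -1 < T) (hτ : -1 < τ) (z : HilbertCube)
    (hzT : (z 0 : ℝ) < T) (ε : ℕ → ℝ) (hε : ∀ i, 0 < ε i) (j : ℕ) (hj : j ≤ m) :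
    ∃ (K : HilbertCube ≃ₜ HilbertCube) (t' : ℝ), -1 < t' ∧ t' ≤ τ ∧ t' ≤ T ∧
      (∀ q, T ≤ (q 0 : ℝ) → K q = q) ∧ (∀ q i, j < i → i ≤ m → K q i = q i) ∧
      ((K.symm z 0 : ℝ) < t') ∧
      ∀ q, (q 0 : ℝ) < t' → ∀ i ≤ j, |(K q i : ℝ) - z i| < ε i := by
  induction j with
  | zero =>
    obtain ⟨K, t', h1, h2, h3, h4, h5, h6⟩ := lift_plan (m + 1) (by omega) T (min τ T) z _
      (P0_lemma T (min τ T) hT hT' (lt_min hτ hT') (pr2 (m + 1) z) (pr2_mem _ _) hzT (ε 0) (hε 0))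
    refine ⟨K, t', h1, h2.trans (min_le_left _ _), h2.trans (min_le_right _ _), h3, ?_, h5, ?_⟩
    · exact fun q i hi him => h4 q i (by omega) (by omega)
    · intro q hq i hi
      obtain rfl : i = 0 := by omega
      exact h6 q hq
  | succ j ih =>
    obtain ⟨K, t, h1, h2, h3, h4, h5, h6, h7⟩ := ih (by omega)
    obtain ⟨k, t', g1, g2, g3, g4, g5, g6⟩ := lift_plan (j + 1) (by omega) t t (K.symm z) _
      (P_lemma t t (h3.trans hT) h1 h1 (pr2 (j + 1) (K.symm z)) (pr2_mem _ _) h6 (ε (j + 1))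
        (hε (j + 1)))
    have hz : K.symm z (j + 1) = z (j + 1) := by
      have := h5 (K.symm z) (j + 1) (by omega) hj
      rw [Homeomorph.apply_symm_apply] at this
      exact this.symm
    have hslab : ∀ q, (q 0 : ℝ) < t → (k q 0 : ℝ) < t := by
      intro q hq
      by_contra hcon
      have := k.injective (g3 (k q) (not_lt.1 hcon))
      rw [this] at hcon
      exact hcon hq
    refine ⟨k.trans K, t', g1, g2.trans h2, g2.trans h3, ?_, ?_, ?_, ?_⟩
    · intro q hq
      rw [Homeomorph.trans_apply, g3 q (h3.trans hq), h4 q hq]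
    · intro q i hi him
      rw [Homeomorph.trans_apply, h5 _ i (by omega) him, g4 q i (by omega) (by omega)]
    · exact g5
    · intro q hq i hi
      rw [Homeomorph.trans_apply]
      rcases Nat.lt_or_ge j i with hij | hij
      · obtain rfl : i = j + 1 := by omega
        have := g6 q hq
        rw [h5 _ (j + 1) (by omega) hj, ← hz]
        exact this
      · exact h7 _ (hslab q (hq.trans_le g2)) i hij

lemma shrink (T τ : ℝ) (hT : T ≤ 1) (hT' : -1 < T) (hτ : -1 < τ) (z : HilbertCube)
    (hzT : (z 0 : ℝ) < T) (V : Set HilbertCube) (hV : IsOpen V) (hzV : z ∈ V) :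
    ∃ (K : HilbertCube ≃ₜ HilbertCube) (t' : ℝ), -1 < t' ∧ t' ≤ τ ∧ t' ≤ T ∧
      (∀ q, T ≤ (q 0 : ℝ) → K q = q) ∧
      ((K.symm z 0 : ℝ) < t') ∧ ∀ q, (q 0 : ℝ) < t' → K q ∈ V := by
  obtain ⟨I, u, hu, hIV⟩ := isOpen_pi_iff.1 hV z hzV
  have : ∀ i, ∃ e : ℝ, 0 < e ∧ (i ∈ I → ∀ y : Icc (-1 : ℝ) 1, |(y : ℝ) - z i| < e → y ∈ u i) := by
    intro i
    by_cases hi : i ∈ I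
    · obtain ⟨e, he, hb⟩ := Metric.isOpen_iff.1 (hu i hi).1 (z i) (hu i hi).2
      exact ⟨e, he, fun _ y hy => hb (by rw [Metric.mem_ball, Subtype.dist_eq, Real.dist_eq]; exact hy)⟩
    · exact ⟨1, one_pos, fun h => absurd h hi⟩
  choose ε hε hεu using this
  obtain ⟨K, t', h1, h2, h3, h4, h5, h6, h7⟩ :=
    shrink_ind (I.sup id) T τ hT hT' hτ z hzT ε hε (I.sup id) le_rfl
  refine ⟨K, t', h1, h2, h3, h4, h6, fun q hq => hIV ?_⟩
  intro i hi
  exact hεu i hi _ (h7 q hq i (Finset.le_sup (f := id) hi))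

/-- State of the infinite process. -/
structure Stage (x : HilbertCube) where
  H : HilbertCube ≃ₜ HilbertCube
  t : ℝ
  ht : -1 < t
  ht1 : t ≤ 1
  hx : (H.symm x 0 : ℝ) < t

lemma next_stage (x : HilbertCube) (S : Stage x) (τ : ℝ) (hτ : -1 < τ) (V : Set HilbertCube)
    (hV : IsOpen V) (hxV : x ∈ V) : ∃ S' : Stage x, S'.t ≤ τ ∧ S'.t ≤ S.t ∧
      (∀ q, S.t ≤ (q 0 : ℝ) → S'.H q = S.H q) ∧ ∀ q, (q 0 : ℝ) < S'.t → S'.H q ∈ V := by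
  obtain ⟨K, t', h1, h2, h3, h4, h5, h6⟩ := shrink S.t τ S.ht1 S.ht hτ (S.H.symm x) S.hx
    (S.H ⁻¹' V) (hV.preimage S.H.continuous) (by simpa using hxV)
  exact ⟨⟨K.trans S.H, t', h1, h3.trans S.ht1, h5⟩, h2, h3,
    fun q hq => by simp [h4 q hq], fun q hq => h6 q hq⟩

lemma one_sided (x : HilbertCube) (c : ℝ) (hc : -1 < c) (hc1 : c ≤ 1) (hx : (x 0 : ℝ) < c) :
    ∃ e : OpenPartialHomeomorph HilbertCube HilbertCube,
      e.source = (negFace 0)ᶜ ∧ e.target = {x}ᶜ ∧ ∀ q, c ≤ (q 0 : ℝ) → e q = q := by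
  let _ := TopologicalSpace.metrizableSpaceMetric HilbertCube
  have pos : ∀ n : ℕ, 0 < 1 / ((n : ℝ) + 1) := fun n => Nat.one_div_pos_of_nat
  have step : ∀ (n : ℕ) (S : Stage x), ∃ S' : Stage x, S'.t ≤ -1 + 1 / ((n : ℝ) + 1) ∧ S'.t ≤ S.t ∧
      (∀ q, S.t ≤ (q 0 : ℝ) → S'.H q = S.H q) ∧
      ∀ q, (q 0 : ℝ) < S'.t → S'.H q ∈ Metric.ball x (1 / ((n : ℝ) + 1)) := fun n S =>
    next_stage x S _ (by linarith [pos n]) _ Metric.isOpen_ball (Metric.mem_ball_self (pos n))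
  choose nxt n1 n2 n3 n4 using step
  let S0 : Stage x := ⟨Homeomorph.refl _, c, hc, hc1, hx⟩
  let S : ℕ → Stage x := fun n => Nat.rec S0 (fun n s => nxt n s) n
  have Ss : ∀ n, S (n + 1) = nxt n (S n) := fun n => rfl
  have s1 : ∀ n, (S (n + 1)).t ≤ -1 + 1 / ((n : ℝ) + 1) := fun n => n1 n (S n)
  have s4 : ∀ n q, (q 0 : ℝ) < (S (n + 1)).t →
    (S (n + 1)).H q ∈ Metric.ball x (1 / ((n : ℝ) + 1)) := fun n => n4 n (S n)
  have anti : Antitone fun n => (S n).t := antitone_nat_of_succ_le fun n => n2 n (S n)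
  have stab : ∀ n m, n ≤ m → ∀ q, (S n).t ≤ (q 0 : ℝ) → (S m).H q = (S n).H q := by
    intro n m hnm q hq
    induction m, hnm using Nat.le_induction with
    | base => rfl
    | succ m hm ih =>
      rw [← ih]
      exact n3 m (S m) q ((anti hm).trans hq)
  have neg_iff : ∀ q : HilbertCube, q ∈ (negFace 0)ᶜ ↔ -1 < (q 0 : ℝ) := by
    intro q
    have h := (q 0).2.1
    simp only [negFace, mem_compl_iff, mem_ofPred_eq]
    exact ⟨fun h' => lt_of_le_of_ne h (Ne.symm h'), fun h' => h'.ne'⟩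
  have ex1 : ∀ q : HilbertCube, q ∈ (negFace 0)ᶜ → ∃ n, (S n).t < (q 0 : ℝ) := by
    intro q hq
    rw [neg_iff] at hq
    obtain ⟨n, hn⟩ := exists_nat_one_div_lt (by linarith : 0 < (q 0 : ℝ) + 1)
    exact ⟨n + 1, by linarith [s1 n]⟩
  have ex2 : ∀ p : HilbertCube, p ∈ ({x} : Set HilbertCube)ᶜ →
      ∃ n : ℕ, p ∈ (Metric.closedBall x (1 / ((n : ℝ) + 1)))ᶜ := by
    intro p hp
    obtain ⟨n, hn⟩ := exists_nat_one_div_lt (dist_pos.2 hp)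
    exact ⟨n, by rw [mem_compl_iff, Metric.mem_closedBall, not_le]; exact hn⟩
  have out : ∀ (n : ℕ) p, p ∈ (Metric.closedBall x (1 / ((n : ℝ) + 1)))ᶜ →
      (S (n + 1)).t ≤ ((S (n + 1)).H.symm p 0 : ℝ) := by
    intro n p hp
    by_contra hcon
    have := s4 n _ (not_le.1 hcon)
    rw [Homeomorph.apply_symm_apply] at this
    exact hp (Metric.ball_subset_closedBall this)
  have hopen : IsOpen (negFace 0)ᶜ := by
    have : (negFace 0)ᶜ = {q : HilbertCube | -1 < (q 0 : ℝ)} := by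
      ext q; exact neg_iff q
    rw [this]
    exact isOpen_lt continuous_const (by fun_prop)
  classical
  let G : HilbertCube → HilbertCube := fun q =>
    if h : ∃ n, (S n).t ≤ (q 0 : ℝ) then (S h.choose).H q else q
  have G_eq : ∀ n q, (S n).t ≤ (q 0 : ℝ) → G q = (S n).H q := by
    intro n q hq
    have h : ∃ n, (S n).t ≤ (q 0 : ℝ) := ⟨n, hq⟩
    simp only [G, dif_pos h]
    rcases le_total n h.choose with h' | h'
    · exact stab _ _ h' q hq
    · exact (stab _ _ h' q h.choose_spec).symm
  let F : HilbertCube → HilbertCube := fun p =>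
    if h : ∃ n, (S n).t ≤ ((S n).H.symm p 0 : ℝ) then (S h.choose).H.symm p else p
  have F_eq : ∀ n p, (S n).t ≤ ((S n).H.symm p 0 : ℝ) → F p = (S n).H.symm p := by
    intro n p hp
    have h : ∃ n, (S n).t ≤ ((S n).H.symm p 0 : ℝ) := ⟨n, hp⟩
    simp only [F, dif_pos h]
    have e1 := stab _ _ (le_max_left n h.choose) _ hp
    have e2 := stab _ _ (le_max_right n h.choose) _ h.choose_spec
    rw [Homeomorph.apply_symm_apply] at e1 e2
    exact (S (max n h.choose)).H.injective (e2.trans e1.symm)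
  refine ⟨{ toFun := G, invFun := F, source := (negFace 0)ᶜ, target := {x}ᶜ
            map_source' := ?_, map_target' := ?_, left_inv' := ?_, right_inv' := ?_
            open_source := hopen, open_target := isOpen_compl_singleton
            continuousOn_toFun := ?_, continuousOn_invFun := ?_ }, rfl, rfl, ?_⟩
  · intro q hq
    obtain ⟨n, hn⟩ := ex1 q hq
    rw [G_eq n q hn.le]
    rintro (h : (S n).H q = x)
    have h' : (S n).H.symm x = q := by rw [Homeomorph.symm_apply_eq, h]
    have := (S n).hx
    rw [h'] at this
    exact lt_asymm this hn
  · intro p hp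
    obtain ⟨n, hn⟩ := ex2 p hp
    have := out n p hn
    rw [F_eq (n + 1) p this, neg_iff]
    exact (S (n + 1)).ht.trans_le this
  · intro q hq
    obtain ⟨n, hn⟩ := ex1 q hq
    rw [G_eq n q hn.le, F_eq n]
    · simp
    · simpa using hn.le
  · intro p hp
    obtain ⟨n, hn⟩ := ex2 p hp
    have := out n p hn
    rw [F_eq (n + 1) p this, G_eq (n + 1) _ this]
    simp
  · intro q hq
    obtain ⟨n, hn⟩ := ex1 q hq
    apply ContinuousAt.continuousWithinAt
    refine (S n).H.continuous.continuousAt.congr ?_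
    have ho : IsOpen {q : HilbertCube | (S n).t < (q 0 : ℝ)} :=
      isOpen_lt continuous_const (by fun_prop)
    filter_upwards [ho.mem_nhds hn] with q' hq'
    exact (G_eq n q' (le_of_lt hq')).symm
  · intro p hp
    obtain ⟨n, hn⟩ := ex2 p hp
    apply ContinuousAt.continuousWithinAt
    refine (S (n + 1)).H.symm.continuous.continuousAt.congr ?_
    filter_upwards [Metric.isClosed_closedBall.isOpen_compl.mem_nhds hn] with p' hp'
    exact (F_eq (n + 1) p' (out n p' hp')).symm
  · intro q hq
    exact G_eq 0 q hq

/-- Reflection of the interval. -/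
def negI : Icc (-1 : ℝ) 1 ≃ₜ Icc (-1 : ℝ) 1 where
  toFun a := ⟨-a, by have := a.2; constructor <;> linarith [this.1, this.2]⟩
  invFun a := ⟨-a, by have := a.2; constructor <;> linarith [this.1, this.2]⟩
  left_inv a := by simp
  right_inv a := by simp
  continuous_toFun := by fun_prop
  continuous_invFun := by fun_prop

/-- Reflection of the Hilbert cube. -/
def negQ : HilbertCube ≃ₜ HilbertCube := Homeomorph.piCongrRight fun _ => negI

lemma negQ_apply (q : HilbertCube) (i : ℕ) : (negQ q i : ℝ) = -(q i : ℝ) := rfl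

lemma negQ_negQ (q : HilbertCube) : negQ (negQ q) = q := by
  funext i; exact Subtype.ext (by simp [negQ_apply])

lemma negQ_symm (q : HilbertCube) : negQ.symm q = negQ q := by
  rw [Homeomorph.symm_apply_eq, negQ_negQ]

lemma other_sided (y : HilbertCube) (c : ℝ) (hc : -1 ≤ c) (hc1 : c < 1) (hy : c < (y 0 : ℝ)) :
    ∃ e : OpenPartialHomeomorph HilbertCube HilbertCube,
      e.source = (posFace 0)ᶜ ∧ e.target = {y}ᶜ ∧ ∀ q, (q 0 : ℝ) ≤ c → e q = q := by
  obtain ⟨e, h1, h2, h3⟩ := one_sided (negQ y) (-c) (by linarith) (by linarith)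
    (by rw [negQ_apply]; linarith)
  refine ⟨(negQ.transOpenPartialHomeomorph e).transHomeomorph negQ, ?_, ?_, ?_⟩
  · ext q
    simp [h1, negFace, posFace, negQ_apply]
  · ext q
    simp [h2, negQ_symm, negQ.injective.eq_iff]
  · intro q hq
    have := h3 (negQ q) (by rw [negQ_apply]; linarith)
    simp [this, negQ_negQ]

lemma main_lt (x y : HilbertCube) (hxy : (x 0 : ℝ) < y 0) :
    Nonempty (((negFace 0 ∪ posFace 0)ᶜ : Set HilbertCube) ≃ₜ
      (({x, y} : Set HilbertCube)ᶜ : Set HilbertCube)) := by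
  obtain ⟨c, hc⟩ : ∃ c, c = ((x 0 : ℝ) + y 0) / 2 := ⟨_, rfl⟩
  have hx1 := (x 0).2.1
  have hy1 := (y 0).2.2
  obtain ⟨e, h1, h2, h3⟩ := one_sided x c (by linarith) (by linarith) (by linarith)
  obtain ⟨f, g1, g2, g3⟩ := other_sided y c (by linarith) (by linarith) (by linarith)
  have hs : (e.trans f).source = (negFace 0 ∪ posFace 0)ᶜ := by
    rw [OpenPartialHomeomorph.trans_source, h1, g1]
    ext q
    simp only [mem_inter_iff, mem_compl_iff, mem_preimage, mem_union, not_or]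
    refine and_congr_right fun hq => not_congr ?_
    constructor
    · intro h
      have h' : c ≤ (e q 0 : ℝ) := by
        have : (e q 0 : ℝ) = 1 := h
        linarith
      have hs : e q ∈ e.source := by
        rw [h1]; intro h''
        have a1 : (e q 0 : ℝ) = 1 := h
        have a2 : (e q 0 : ℝ) = -1 := h''
        linarith
      have := e.injOn hs (by rw [h1]; exact hq) (h3 _ h')
      rwa [this] at h
    · intro h
      have : (q 0 : ℝ) = 1 := h
      rwa [h3 q (by linarith)]
  have ht : (e.trans f).target = {x, y}ᶜ := by
    rw [OpenPartialHomeomorph.trans_target, h2, g2]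
    ext p
    simp only [mem_inter_iff, mem_compl_iff, mem_preimage, mem_insert_iff, mem_singleton_iff, not_or]
    rw [and_comm (a := ¬ p = x)]
    refine and_congr_right fun hp => not_congr ?_
    have hfx : f x = x := g3 x (by linarith)
    have hxs : x ∈ f.source := by
      rw [g1]; intro h
      have : (x 0 : ℝ) = 1 := h
      linarith
    constructor
    · intro h
      rw [← f.right_inv (x := p) (by rw [g2]; exact hp), h, hfx]
    · rintro rfl
      have := f.left_inv hxs
      rwa [hfx] at this
  have := (e.trans f).toHomeomorphSourceTarget
  rw [hs, ht] at this
  exact ⟨this⟩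

/-- swapping coordinates -/
def swapQ (i : ℕ) : HilbertCube ≃ₜ HilbertCube :=
  Homeomorph.piCongrLeft (Y := fun _ : ℕ => Icc (-1 : ℝ) 1) (Equiv.swap 0 i)

lemma swapQ_zero (i : ℕ) (q : HilbertCube) : swapQ i q 0 = q i := by
  have := Equiv.piCongrLeft_apply_apply (fun _ : ℕ => Icc (-1 : ℝ) 1) (Equiv.swap 0 i) q i
  rw [Equiv.swap_apply_right] at this
  exact this

lemma pair_homeo (K : HilbertCube ≃ₜ HilbertCube) (x y : HilbertCube) :
    Nonempty ((({K x, K y} : Set HilbertCube)ᶜ : Set HilbertCube) ≃ₜ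
      (({x, y} : Set HilbertCube)ᶜ : Set HilbertCube)) :=
  ⟨(K.subtype (fun a => by simp [K.injective.eq_iff])).symm⟩

/-- For distinct points `x, y` of the Hilbert cube, the complement of the
union of the two opposite faces `W_1^- ∪ W_1^+` is homeomorphic to `Q \ {x, y}`. -/
theorem compl_faces_homeomorph_compl_pair (x y : HilbertCube) (hxy : x ≠ y) :
    Nonempty (((negFace 0 ∪ posFace 0)ᶜ : Set HilbertCube) ≃ₜ
      (({x, y} : Set HilbertCube)ᶜ : Set HilbertCube)) := by
  obtain ⟨i, hi⟩ := Function.ne_iff.1 hxy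
  have hi' : (x i : ℝ) ≠ y i := fun h => hi (Subtype.ext h)
  obtain ⟨g⟩ := pair_homeo (swapQ i) x y
  rcases lt_or_gt_of_ne hi' with h | h
  · obtain ⟨f⟩ := main_lt (swapQ i x) (swapQ i y) (by rwa [swapQ_zero, swapQ_zero])
    exact ⟨f.trans g⟩
  · obtain ⟨f⟩ := main_lt (swapQ i y) (swapQ i x) (by rwa [swapQ_zero, swapQ_zero])
    rw [Set.pair_comm] at f
    exact ⟨f.trans g⟩
end

section
/- For any two distinct points x, y of the Hilbert cube Q there exists a continuous map f̄ : Q → Q such that f̄(W_1^-) = {x}, f̄(W_1^+) = {y}, and the restriction of f̄ to Q \ (W_1^- ∪ W_1^+) is a homeomorphism onto Q \ {x, y}. -/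
open Set

abbrev UQ : Type := unitInterval × HilbertCube

/-- `F` collapses `{0} × Q` to `(a,u)`, is otherwise injective, fixes `{1} × Q`. -/
structure IsCone (F : UQ → UQ) (a : unitInterval) (u : HilbertCube) : Prop where
  cont : Continuous F
  one : ∀ z, F (1, z) = (1, z)
  zero : ∀ z, F (0, z) = (a, u)
  inj : ∀ p q, F p = F q → p.1 = q.1 ∧ (p.1 = 0 ∨ p.2 = q.2)
  surj : Function.Surjective F

noncomputable section

def phi0 (u w : HilbertCube) : ℝ := ⨆ n, |(w n : ℝ) - u n| / (4 * 2 ^ n)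

lemma term_bound (u w : HilbertCube) (n : ℕ) :
    |(w n : ℝ) - u n| / (4 * 2 ^ n) ≤ 1 / 2 * (1 / 2) ^ n := by
  have h1 : |(w n : ℝ) - u n| ≤ 2 := by
    have := (w n).2; have := (u n).2
    simp only [mem_Icc] at *
    rw [abs_le]; constructor <;> linarith
  rw [div_le_iff₀ (by positivity)]
  have : (1 / 2 : ℝ) * (1 / 2) ^ n * (4 * 2 ^ n) = 2 := by
    rw [show (1 / 2 : ℝ) * (1 / 2) ^ n * (4 * 2 ^ n) = 2 * ((1 / 2) * 2) ^ n by
      rw [mul_pow]; ring]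
    norm_num
  linarith

lemma term_bound' (u w : HilbertCube) (n : ℕ) :
    |(w n : ℝ) - u n| / (4 * 2 ^ n) ≤ 1 / 2 := by
  have := term_bound u w n
  have h : ((1 : ℝ) / 2) ^ n ≤ 1 := pow_le_one₀ (by norm_num) (by norm_num)
  linarith

lemma le_phi0 (u w : HilbertCube) (n : ℕ) : |(w n : ℝ) - u n| / (4 * 2 ^ n) ≤ phi0 u w :=
  le_ciSup (f := fun n => |(w n : ℝ) - u n| / (4 * 2 ^ n))
    ⟨1 / 2, by rintro _ ⟨n, rfl⟩; exact term_bound' u w n⟩ n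

lemma phi0_le (u w : HilbertCube) (b : ℝ)
    (h : ∀ n, |(w n : ℝ) - u n| / (4 * 2 ^ n) ≤ b) : phi0 u w ≤ b := ciSup_le h

lemma phi0_nonneg (u w : HilbertCube) : 0 ≤ phi0 u w :=
  le_trans (by positivity) (le_phi0 u w 0)

lemma phi0_half (u w : HilbertCube) : phi0 u w ≤ 1 / 2 := phi0_le _ _ _ (term_bound' u w)

lemma continuous_phi0 (u : HilbertCube) : Continuous (phi0 u) := by
  rw [continuous_iff_continuousAt]
  intro w
  rw [ContinuousAt, Metric.tendsto_nhds]
  intro ε hε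
  obtain ⟨N, hN⟩ := exists_pow_lt_of_lt_one (half_pos hε) (by norm_num : (1 / 2 : ℝ) < 1)
  have h1 : ∀ᶠ w' in nhds w, ∀ n ∈ Finset.range N, |(w' n : ℝ) - w n| < ε / 2 := by
    rw [Filter.eventually_all_finset]
    intro n _
    have hc : Continuous (fun w' : HilbertCube => |(w' n : ℝ) - w n|) := by fun_prop
    have := hc.tendsto w
    simp only [sub_self, abs_zero] at this
    exact this.eventually (gt_mem_nhds (half_pos hε))
  have key : ∀ w w' : HilbertCube, (∀ n ∈ Finset.range N, |(w' n : ℝ) - w n| < ε / 2) →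
      phi0 u w' ≤ phi0 u w + ε / 2 := by
    intro w w' h
    apply phi0_le
    intro n
    by_cases hn : n < N
    · have h2 := h n (Finset.mem_range.2 hn)
      have h3 := le_phi0 u w n
      have h4 : |(w' n : ℝ) - u n| ≤ |(w' n : ℝ) - w n| + |(w n : ℝ) - u n| := abs_sub_le _ _ _
      have h5 : (1 : ℝ) ≤ 4 * 2 ^ n := by
        have : (1 : ℝ) ≤ 2 ^ n := one_le_pow₀ (by norm_num)
        linarith
      have h6 : |(w' n : ℝ) - w n| / (4 * 2 ^ n) ≤ |(w' n : ℝ) - w n| :=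
        div_le_self (abs_nonneg _) h5
      have h7 : |(w' n : ℝ) - u n| / (4 * 2 ^ n) ≤
          |(w' n : ℝ) - w n| / (4 * 2 ^ n) + |(w n : ℝ) - u n| / (4 * 2 ^ n) := by
        rw [← add_div]; gcongr
      linarith
    · have h2 := term_bound u w' n
      have h3 : ((1 : ℝ) / 2) ^ n ≤ (1 / 2) ^ N :=
        pow_le_pow_of_le_one (by norm_num) (by norm_num) (not_lt.1 hn)
      have := phi0_nonneg u w
      have : (0 : ℝ) ≤ (1 / 2) ^ n := by positivity
      linarith
  filter_upwards [h1] with w' hw'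
  have h2 := key w w' hw'
  have h3 := key w' w (fun n hn => by rw [abs_sub_comm]; exact hw' n hn)
  rw [Real.dist_eq, abs_lt]
  constructor <;> linarith

def lo (u r : ℝ) : ℝ := max (-1) (u - r)
def hi (u r : ℝ) : ℝ := min 1 (u + r)

lemma lo_le_hi {u r : ℝ} (hu : u ∈ Icc (-1 : ℝ) 1) (hr : 0 ≤ r) : lo u r ≤ hi u r := by
  obtain ⟨h1, h2⟩ := hu
  exact le_min (max_le (by linarith) (by linarith)) (max_le (by linarith) (by linarith))

lemma lo_lt_hi {u r : ℝ} (hu : u ∈ Icc (-1 : ℝ) 1) (hr : 0 < r) : lo u r < hi u r := by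
  obtain ⟨h1, h2⟩ := hu
  exact lt_min (max_lt (by linarith) (by linarith)) (max_lt (by linarith) (by linarith))

def wr (u r z : ℝ) : ℝ := lo u r + (z + 1) / 2 * (hi u r - lo u r)

lemma wr_mem {u r z : ℝ} (hu : u ∈ Icc (-1 : ℝ) 1) (hr : 0 ≤ r) (hz : z ∈ Icc (-1 : ℝ) 1) :
    wr u r z ∈ Icc (lo u r) (hi u r) := by
  have := lo_le_hi hu hr
  obtain ⟨h1, h2⟩ := hz
  unfold wr
  constructor <;> nlinarith

lemma wr_mem' {u r z : ℝ} (hu : u ∈ Icc (-1 : ℝ) 1) (hr : 0 ≤ r) (hz : z ∈ Icc (-1 : ℝ) 1) :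
    wr u r z ∈ Icc (-1 : ℝ) 1 := by
  have := wr_mem hu hr hz
  exact ⟨(le_max_left _ _).trans this.1, this.2.trans (min_le_left _ _)⟩

lemma wr_abs {u r z : ℝ} (hu : u ∈ Icc (-1 : ℝ) 1) (hr : 0 ≤ r) (hz : z ∈ Icc (-1 : ℝ) 1) :
    |wr u r z - u| ≤ r := by
  have := wr_mem hu hr hz
  have h1 : u - r ≤ wr u r z := (le_max_right _ _).trans this.1
  have h2 : wr u r z ≤ u + r := this.2.trans (min_le_right _ _)
  rw [abs_le]; constructor <;> linarith

def wmap (u : HilbertCube) (p : UQ) : HilbertCube := fun n =>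
  ⟨wr (u n) (4 * 2 ^ n * p.1) (p.2 n),
    wr_mem' (u n).2 (by have := p.1.2.1; positivity) (p.2 n).2⟩

lemma continuous_wmap (u : HilbertCube) : Continuous (wmap u) := by
  refine continuous_pi fun n => Continuous.subtype_mk ?_ _
  unfold wr lo hi
  fun_prop

lemma phi0_wmap (u : HilbertCube) (p : UQ) : phi0 u (wmap u p) ≤ p.1 := by
  apply phi0_le
  intro n
  rw [div_le_iff₀ (by positivity), mul_comm]
  exact wr_abs (u n).2 (by have := p.1.2.1; positivity) (p.2 n).2

def F0 (u : HilbertCube) (p : UQ) : UQ :=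
  (⟨(p.1 - phi0 u (wmap u p)) / (1 - phi0 u (wmap u p)), by
    have h1 := phi0_wmap u p
    have h2 := phi0_half u (wmap u p)
    have h3 := p.1.2.2
    constructor
    · exact div_nonneg (by linarith) (by linarith)
    · rw [div_le_one (by linarith)]; linarith⟩, wmap u p)

lemma wmap_one (u z : HilbertCube) : wmap u (1, z) = z := by
  funext n
  apply Subtype.ext
  have h : (1 : ℝ) ≤ 2 ^ n := one_le_pow₀ (by norm_num)
  obtain ⟨h1, h2⟩ := (u n).2
  have e1 : lo (u n) (4 * 2 ^ n * 1) = -1 := max_eq_left (by linarith)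
  have e2 : hi (u n) (4 * 2 ^ n * 1) = 1 := min_eq_left (by linarith)
  simp only [wmap, wr, unitInterval, Icc.coe_one, e1, e2]
  ring

lemma wmap_zero (u z : HilbertCube) : wmap u (0, z) = u := by
  funext n
  apply Subtype.ext
  obtain ⟨h1, h2⟩ := (u n).2
  have e1 : lo (u n) (4 * 2 ^ n * 0) = u n := by rw [lo, max_eq_right] <;> linarith
  have e2 : hi (u n) (4 * 2 ^ n * 0) = u n := by rw [hi, min_eq_right] <;> linarith
  simp only [wmap, wr, Icc.coe_zero, e1, e2]
  ring

lemma phi0_self (u : HilbertCube) : phi0 u u = 0 := by simp [phi0]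

lemma isCone_F0 (u : HilbertCube) : IsCone (F0 u) 0 u where
  cont := by
    have h1 := continuous_wmap u
    have h2 : Continuous fun p => phi0 u (wmap u p) := (continuous_phi0 u).comp h1
    refine Continuous.prodMk (Continuous.subtype_mk (Continuous.div ?_ ?_ ?_) _) h1
    · fun_prop
    · fun_prop
    · intro p
      have := phi0_half u (wmap u p)
      linarith
  one z := by
    refine Prod.ext (Subtype.ext ?_) (wmap_one u z)
    have := phi0_half u z
    simp only [F0, wmap_one, Icc.coe_one]
    exact div_self (by linarith)
  zero z := by
    refine Prod.ext (Subtype.ext ?_) (wmap_zero u z)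
    simp [F0, wmap_zero, phi0_self]
  inj p q h := by
    have hw : wmap u p = wmap u q := congrArg Prod.snd h
    have ht : ((F0 u p).1 : ℝ) = (F0 u q).1 := by rw [h]
    simp only [F0] at ht
    rw [hw] at ht
    have h1 := phi0_half u (wmap u q)
    have h2 : (p.1 : ℝ) = q.1 := by
      rw [div_left_inj' (by linarith)] at ht
      linarith
    refine ⟨Subtype.ext h2, ?_⟩
    by_cases h0 : p.1 = 0
    · exact Or.inl h0
    right
    funext n
    apply Subtype.ext
    have h3 : (0 : ℝ) < p.1 := lt_of_le_of_ne p.1.2.1 (fun h => h0 (Subtype.ext h.symm))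
    have h4 := congrArg Subtype.val (congrFun hw n)
    simp only [wmap, ← h2] at h4
    have h5 := lo_lt_hi (u n).2 (show 0 < 4 * 2 ^ n * (p.1 : ℝ) by positivity)
    simp only [wr] at h4
    have h6 := mul_right_cancel₀ (sub_pos.2 h5).ne' (add_left_cancel h4)
    linarith
  surj := by
    rintro ⟨s, w⟩
    have h1 := phi0_half u w
    have h1' := phi0_nonneg u w
    have hs1 := s.2.1
    have hs2 := s.2.2
    set t : ℝ := phi0 u w + s * (1 - phi0 u w) with ht
    have htm : t ∈ Icc (0 : ℝ) 1 := ⟨by nlinarith, by nlinarith⟩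
    have hb : ∀ n, |(w n : ℝ) - u n| ≤ 4 * 2 ^ n * t := by
      intro n
      have := le_phi0 u w n
      rw [div_le_iff₀ (by positivity)] at this
      have h2 : phi0 u w ≤ t := by nlinarith
      calc _ ≤ _ := this
        _ ≤ t * (4 * 2 ^ n) := by gcongr
        _ = _ := by ring
    have hlo : ∀ n, lo (u n) (4 * 2 ^ n * t) ≤ w n := fun n =>
      max_le (w n).2.1 (by linarith [(abs_le.1 (hb n)).1])
    have hhi : ∀ n, w n ≤ hi (u n) (4 * 2 ^ n * t) := fun n =>
      le_min (w n).2.2 (by linarith [(abs_le.1 (hb n)).2])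
    obtain ⟨z, hz⟩ : ∃ z : HilbertCube, wmap u (⟨t, htm⟩, z) = w := by
      have : ∀ n, ∃ z : Icc (-1 : ℝ) 1, wr (u n) (4 * 2 ^ n * t) z = w n := by
        intro n
        rcases (lo_le_hi (u n).2 (show 0 ≤ 4 * 2 ^ n * t by have := htm.1; positivity)).eq_or_lt
          with h | h
        · refine ⟨⟨0, by norm_num⟩, ?_⟩
          have := hlo n; have := hhi n
          simp only [wr, h]
          linarith
        · have := hlo n; have := hhi n
          have hp := sub_pos.2 h
          refine ⟨⟨2 * ((w n - lo (u n) (4 * 2 ^ n * t)) /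
            (hi (u n) (4 * 2 ^ n * t) - lo (u n) (4 * 2 ^ n * t))) - 1, ?_, ?_⟩, ?_⟩
          · have := div_nonneg (sub_nonneg.2 (hlo n)) hp.le
            linarith
          · have : (w n - lo (u n) (4 * 2 ^ n * t)) /
                (hi (u n) (4 * 2 ^ n * t) - lo (u n) (4 * 2 ^ n * t)) ≤ 1 := by
              rw [div_le_one hp]; linarith
            linarith
          · simp only [wr]
            field_simp
            ring
      choose z hz using this
      exact ⟨z, funext fun n => Subtype.ext (hz n)⟩
    refine ⟨(⟨t, htm⟩, z), Prod.ext (Subtype.ext ?_) hz⟩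
    simp only [F0, hz]
    rw [div_eq_iff (by linarith), ht]
    ring

def cc (n : ℕ) : ℝ := 1 / 9 * (2 / 3) ^ n
lemma cc_pos (n : ℕ) : 0 < cc n := by unfold cc; positivity

lemma cc_le (n : ℕ) : cc n ≤ 1 / 9 := by
  have : ((2 : ℝ) / 3) ^ n ≤ 1 := pow_le_one₀ (by norm_num) (by norm_num)
  unfold cc; linarith

lemma hasSum_cc : HasSum cc (1 / 3) := by
  have := (hasSum_geometric_of_lt_one (r := 2 / 3) (by norm_num) (by norm_num)).mul_left (1 / 9)
  rw [show (1 / 9 : ℝ) * (1 - 2 / 3)⁻¹ = 1 / 3 by norm_num] at this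
  exact this

def gg (w : ℝ) : ℝ := max (w + 1 / 2) 0

lemma gg_nonneg (w : ℝ) : 0 ≤ gg w := le_max_right _ _
lemma le_gg (w : ℝ) : w + 1 / 2 ≤ gg w := le_max_left _ _
lemma gg_le (w : Icc (-1 : ℝ) 1) : gg w ≤ 3 / 2 :=
  max_le (by linarith [w.2.2]) (by norm_num)

def term (n : ℕ) (w : HilbertCube) : ℝ := cc n * gg (w n)

lemma term_nonneg (n : ℕ) (w : HilbertCube) : 0 ≤ term n w :=
  mul_nonneg (cc_pos n).le (gg_nonneg _)

lemma term_le (n : ℕ) (w : HilbertCube) : term n w ≤ cc n * (3 / 2) :=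
  mul_le_mul_of_nonneg_left (gg_le _) (cc_pos n).le

lemma summable_term (w : HilbertCube) : Summable (fun n => term n w) :=
  Summable.of_nonneg_of_le (fun n => term_nonneg n w) (fun n => term_le n w)
    (hasSum_cc.mul_right _).summable

def phi (w : HilbertCube) : ℝ := ∑' n, term n w

def ps (n : ℕ) (w : HilbertCube) : ℝ := ∑ m ∈ Finset.range n, term m w

lemma ps_le (n : ℕ) (w : HilbertCube) : ps n w ≤ phi w :=
  (summable_term w).sum_le_tsum _ (fun i _ => term_nonneg i w)

lemma ps_succ (n : ℕ) (w : HilbertCube) : ps (n + 1) w = ps n w + term n w :=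
  Finset.sum_range_succ _ _

lemma phi_nonneg (w : HilbertCube) : 0 ≤ phi w := tsum_nonneg (fun n => term_nonneg n w)

lemma phi_le (w : HilbertCube) : phi w ≤ 1 / 2 := by
  have := hasSum_le (fun n => term_le n w) (summable_term w).hasSum (hasSum_cc.mul_right (3 / 2))
  unfold phi
  linarith

lemma phi_le_of (w : HilbertCube) (t : ℝ) (h : ∀ n, ps n w ≤ t) : phi w ≤ t :=
  le_of_tendsto' (summable_term w).hasSum.tendsto_sum_nat h

lemma continuous_term (n : ℕ) : Continuous (term n) := by
  unfold term gg; fun_prop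

lemma continuous_phi : Continuous phi := by
  refine continuous_tsum continuous_term (hasSum_cc.mul_right (3 / 2)).summable ?_
  intro n w
  rw [Real.norm_of_nonneg (term_nonneg n w)]
  exact term_le n w

lemma continuous_ps (n : ℕ) : Continuous (ps n) :=
  continuous_finsetSum _ fun i _ => continuous_term i

def bb (r : ℝ) : ℝ := min 1 (r - 1 / 2)

lemma bb_one {r : ℝ} (h : 3 / 2 ≤ r) : bb r = 1 := min_eq_left (by linarith)
lemma bb_le (r : ℝ) : bb r ≤ 1 := min_le_left _ _
lemma bb_ge {r : ℝ} (h : 0 ≤ r) : -1 / 2 ≤ bb r := le_min (by norm_num) (by linarith)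

def rr (n : ℕ) (t : ℝ) (w : HilbertCube) : ℝ := (t - ps n w) / cc n

def tt (p : UQ) : ℝ := phi p.2 + p.1 * (1 - phi p.2)

lemma tt_ge (p : UQ) : phi p.2 ≤ tt p := by
  have := phi_le p.2; have := p.1.2.1
  unfold tt; nlinarith

lemma tt_le (p : UQ) : tt p ≤ 1 := by
  have := phi_le p.2; have := p.1.2.2
  unfold tt; nlinarith

lemma rr_nonneg {n : ℕ} {t : ℝ} {w : HilbertCube} (h : phi w ≤ t) : 0 ≤ rr n t w :=
  div_nonneg (by linarith [ps_le n w]) (cc_pos n).le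

lemma le_bb_rr {n : ℕ} {t : ℝ} {w : HilbertCube} (h : phi w ≤ t) : w n ≤ bb (rr n t w) := by
  refine le_min (w n).2.2 ?_
  have h1 := ps_le (n + 1) w
  rw [ps_succ] at h1
  have h2 : gg (w n) ≤ rr n t w := by
    rw [rr, le_div_iff₀ (cc_pos n), mul_comm]
    change term n w ≤ _
    linarith
  linarith [le_gg (w n)]

def HH (p : UQ) : UQ :=
  (⟨tt p, (phi_nonneg _).trans (tt_ge p), tt_le p⟩, fun n =>
    ⟨-1 + 2 * (p.2 n + 1) / (bb (rr n (tt p) p.2) + 1), by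
      have h1 := bb_ge (rr_nonneg (n := n) (tt_ge p))
      have h2 := le_bb_rr (n := n) (tt_ge p)
      have h3 := (p.2 n).2.1
      constructor
      · have : 0 ≤ 2 * ((p.2 n : ℝ) + 1) / (bb (rr n (tt p) p.2) + 1) :=
          div_nonneg (by linarith) (by linarith)
        linarith
      · have : 2 * ((p.2 n : ℝ) + 1) / (bb (rr n (tt p) p.2) + 1) ≤ 2 := by
          rw [div_le_iff₀ (by linarith)]; linarith
        linarith⟩)

lemma HH_cont : Continuous HH := by
  have h1 : Continuous fun p : UQ => phi p.2 := continuous_phi.comp continuous_snd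
  have h2 : Continuous tt := by unfold tt; fun_prop
  refine Continuous.prodMk (Continuous.subtype_mk h2 _) (continuous_pi fun n =>
    Continuous.subtype_mk (continuous_const.add (Continuous.div ?_ ?_ ?_)) _)
  · fun_prop
  · have h3 : Continuous fun p : UQ => ps n p.2 := (continuous_ps n).comp continuous_snd
    have h4 := (cc_pos n).ne'
    unfold bb rr
    fun_prop
  · intro p
    have h1 := bb_ge (rr_nonneg (n := n) (tt_ge p))
    linarith

lemma HH_snd_eq (p : UQ) (h : ∀ n, 3 / 2 ≤ rr n (tt p) p.2) : (HH p).2 = p.2 := by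
  funext n
  apply Subtype.ext
  simp only [HH, bb_one (h n)]
  ring

lemma HH_one (z : HilbertCube) : HH (1, z) = (1, z) := by
  have h0 : tt (1, z) = 1 := by simp [tt]
  refine Prod.ext (Subtype.ext h0) (HH_snd_eq _ fun n => ?_)
  rw [h0, rr, le_div_iff₀ (cc_pos n)]
  have := cc_le n
  have := ps_le n z
  have := phi_le z
  simp only
  linarith

lemma phi_tail (u : HilbertCube) (hu : ∀ n, (0 : ℝ) ≤ u n) (n : ℕ) :
    3 / 2 * cc n ≤ phi u - ps n u := by
  have h1 : phi u = ps n u + ∑' k, term (k + n) u :=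
    ((summable_term u).sum_add_tsum_nat_add n).symm
  have h2 : HasSum (fun k => cc (k + n) * (1 / 2)) (3 / 2 * cc n) := by
    have := hasSum_cc.mul_right (9 * cc n / 2)
    have e1 : (fun k => cc (k + n) * (1 / 2)) = fun i => cc i * (9 * cc n / 2) := by
      funext k; simp only [cc, pow_add]; ring
    have e2 : 3 / 2 * cc n = 1 / 3 * (9 * cc n / 2) := by ring
    rw [e1, e2]
    exact this
  have h3 := hasSum_le (fun k => ?_) h2 (((summable_nat_add_iff n).2 (summable_term u)).hasSum)
  · linarith
  · exact mul_le_mul_of_nonneg_left (by linarith [le_gg (u (k + n)), hu (k + n)]) (cc_pos _).le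

lemma HH_zero (u : HilbertCube) (hu : ∀ n, (0 : ℝ) ≤ u n) :
    HH (0, u) = (⟨phi u, phi_nonneg u, (phi_le u).trans (by norm_num)⟩, u) := by
  have h0 : tt (0, u) = phi u := by simp [tt]
  refine Prod.ext (Subtype.ext h0) (HH_snd_eq _ fun n => ?_)
  rw [h0, rr, le_div_iff₀ (cc_pos n)]
  exact phi_tail u hu n

lemma HH_inj : Function.Injective HH := by
  intro p q h
  have ht : tt p = tt q := congrArg (fun x : UQ => (x.1 : ℝ)) h
  have hv : ∀ n, ((HH p).2 n : ℝ) = (HH q).2 n := fun n => by rw [h]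
  have hw : ∀ n, p.2 n = q.2 n := by
    intro n
    induction n using Nat.strong_induction_on with
    | _ n ih =>
      have hps : ps n p.2 = ps n q.2 := by
        refine Finset.sum_congr rfl fun m hm => ?_
        simp only [term, ih m (Finset.mem_range.1 hm)]
      have := hv n
      simp only [HH, rr, hps, ht] at this
      have h1 := bb_ge (rr_nonneg (n := n) (tt_ge q))
      simp only [rr] at h1
      have h2 := add_left_cancel this
      rw [div_left_inj' (by linarith)] at h2
      apply Subtype.ext
      linarith
  have hw' : p.2 = q.2 := funext hw
  refine Prod.ext (Subtype.ext ?_) hw'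
  simp only [tt, hw'] at ht
  have := phi_le q.2
  exact mul_right_cancel₀ (by linarith) (add_left_cancel ht)

/-- remaining budget -/
def RR (t : ℝ) (v : HilbertCube) : ℕ → ℝ
  | 0 => t
  | n + 1 => RR t v n - cc n * gg (-1 + (v n + 1) * (bb (RR t v n / cc n) + 1) / 2)

lemma RR_nonneg (t : ℝ) (ht : 0 ≤ t) (v : HilbertCube) (n : ℕ) : 0 ≤ RR t v n := by
  induction n with
  | zero => exact ht
  | succ n ih =>
    have hr : 0 ≤ RR t v n / cc n := div_nonneg ih (cc_pos n).le
    have h1 := bb_ge hr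
    have h2 := (v n).2.1
    have h3 := (v n).2.2
    have h4 : -1 + (v n + 1) * (bb (RR t v n / cc n) + 1) / 2 ≤ bb (RR t v n / cc n) := by
      nlinarith
    have h5 : bb (RR t v n / cc n) ≤ RR t v n / cc n - 1 / 2 := min_le_right _ _
    have h6 : gg (-1 + (v n + 1) * (bb (RR t v n / cc n) + 1) / 2) ≤ RR t v n / cc n :=
      max_le (by linarith) hr
    rw [le_div_iff₀ (cc_pos n)] at h6
    simp only [RR]
    linarith

lemma HH_surj : Function.Surjective HH := by
  rintro ⟨t, v⟩
  have hR := RR_nonneg t t.2.1 v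
  have hm : ∀ n, -1 + ((v n : ℝ) + 1) * (bb (RR t v n / cc n) + 1) / 2 ∈ Icc (-1 : ℝ) 1 := by
    intro n
    have h1 := bb_ge (div_nonneg (hR n) (cc_pos n).le)
    have h1' := bb_le (RR t v n / cc n)
    have h2 := (v n).2.1
    have h3 := (v n).2.2
    constructor <;> nlinarith
  let w : HilbertCube := fun n => ⟨_, hm n⟩
  have hps : ∀ n, t - ps n w = RR t v n := by
    intro n
    induction n with
    | zero => simp [ps, RR]
    | succ n ih =>
      rw [ps_succ, RR, ← sub_sub, ih]
      rfl
  have hphi : phi w ≤ t := phi_le_of _ _ fun n => by linarith [hps n, hR n]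
  have h1 := phi_le w
  have hs : ((t : ℝ) - phi w) / (1 - phi w) ∈ Icc (0 : ℝ) 1 := by
    constructor
    · exact div_nonneg (by linarith) (by linarith)
    · rw [div_le_one (by linarith)]; linarith [t.2.2]
  have htt : tt (⟨_, hs⟩, w) = t := by
    have : 1 - phi w ≠ 0 := by linarith
    simp only [tt]
    field_simp
    ring
  refine ⟨(⟨_, hs⟩, w), Prod.ext (Subtype.ext htt) (funext fun n => Subtype.ext ?_)⟩
  simp only [HH, htt, rr, hps]
  have h3 := bb_ge (div_nonneg (hR n) (cc_pos n).le)
  have h4 : bb (RR t v n / cc n) + 1 ≠ 0 := by linarith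
  simp only [w]
  field_simp
  ring

/-- Post-composition of a cone map with a bijection. -/
lemma IsCone.comp {F G : UQ → UQ} {a b : unitInterval} {u v : HilbertCube} (hF : IsCone F a u)
    (hc : Continuous G) (hi : Function.Injective G) (hs : Function.Surjective G)
    (h1 : ∀ z, G (1, z) = (1, z)) (h0 : G (a, u) = (b, v)) : IsCone (G ∘ F) b v where
  cont := hc.comp hF.cont
  one z := by simp [hF.one, h1]
  zero z := by simp [hF.zero, h0]
  inj p q h := hF.inj p q (hi h)
  surj := hs.comp hF.surj

def neg1 (w : Icc (-1 : ℝ) 1) : Icc (-1 : ℝ) 1 :=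
  ⟨-w, by linarith [w.2.2], by linarith [w.2.1]⟩

lemma neg1_neg1 (w : Icc (-1 : ℝ) 1) : neg1 (neg1 w) = w := Subtype.ext (neg_neg _)

lemma continuous_neg1 : Continuous neg1 := by
  unfold neg1
  exact Continuous.subtype_mk (by fun_prop) _

/-- flip the coordinates in `s` -/
def flipQ (s : ℕ → Prop) [DecidablePred s] (w : HilbertCube) : HilbertCube :=
  fun n => if s n then neg1 (w n) else w n

lemma flipQ_flipQ (s : ℕ → Prop) [DecidablePred s] (w : HilbertCube) : flipQ s (flipQ s w) = w := by
  funext n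
  by_cases h : s n <;> simp [flipQ, h, neg1_neg1]

lemma continuous_flipQ (s : ℕ → Prop) [DecidablePred s] : Continuous (flipQ s) := by
  refine continuous_pi fun n => ?_
  by_cases h : s n
  · simp only [flipQ, h, if_true]
    exact continuous_neg1.comp (continuous_apply n)
  · simp only [flipQ, h, if_false]
    exact continuous_apply n

def flipUQ (s : ℕ → Prop) [DecidablePred s] (p : UQ) : UQ := (p.1, flipQ s p.2)

lemma flipUQ_inv (s : ℕ → Prop) [DecidablePred s] (p : UQ) : flipUQ s (flipUQ s p) = p := by
  simp [flipUQ, flipQ_flipQ]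

lemma continuous_flipUQ (s : ℕ → Prop) [DecidablePred s] : Continuous (flipUQ s) :=
  continuous_fst.prodMk ((continuous_flipQ s).comp continuous_snd)

lemma IsCone.flip {F : UQ → UQ} {a : unitInterval} {u : HilbertCube} (hF : IsCone F a u)
    (s : ℕ → Prop) [DecidablePred s] :
    IsCone (fun p => flipUQ s (F (flipUQ s p))) a (flipQ s u) where
  cont := (continuous_flipUQ s).comp (hF.cont.comp (continuous_flipUQ s))
  one z := by simp [flipUQ, hF.one, flipQ_flipQ]
  zero z := by simp [flipUQ, hF.zero]
  inj p q h := by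
    have h1 := (Function.LeftInverse.injective (flipUQ_inv s)) h
    have h2 := hF.inj _ _ h1
    exact ⟨h2.1, h2.2.imp id fun h => (Function.LeftInverse.injective (flipQ_flipQ s)) h⟩
  surj := by
    intro y
    obtain ⟨x, hx⟩ := hF.surj (flipUQ s y)
    exact ⟨flipUQ s x, by simp [flipUQ_inv, hx]⟩

lemma mob_den {k : ℝ} (hk : 0 < k) (t : unitInterval) : 0 < (t : ℝ) + k * (1 - t) := by
  have h1 := t.2.1
  have h2 := t.2.2
  rcases h1.eq_or_lt with h | h
  · rw [← h]; linarith
  · have : 0 ≤ k * (1 - (t : ℝ)) := mul_nonneg hk.le (by linarith)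
    linarith

/-- Möbius reparametrisation of the unit interval. -/
def mob (k : ℝ) (hk : 0 < k) (t : unitInterval) : unitInterval :=
  ⟨t / (t + k * (1 - t)), by
    have h1 := t.2.1
    have h2 := t.2.2
    have h3 := mob_den hk t
    constructor
    · exact div_nonneg h1 h3.le
    · rw [div_le_one h3]
      have : 0 ≤ k * (1 - (t : ℝ)) := mul_nonneg hk.le (by linarith)
      linarith⟩

lemma mob_inv (k l : ℝ) (hk : 0 < k) (hl : 0 < l) (h : k * l = 1) (t : unitInterval) :
    mob l hl (mob k hk t) = t := by
  apply Subtype.ext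
  have h3 := (mob_den hk t).ne'
  have h4 := (mob_den hl (mob k hk t)).ne'
  simp only [mob] at h4 ⊢
  rw [div_eq_iff h4]
  have e : 1 - (t : ℝ) / (t + k * (1 - t)) = k * (1 - t) / (t + k * (1 - t)) := by
    field_simp; ring
  rw [e, ← mul_div_assoc, ← mul_assoc, mul_comm l k, h, one_mul, ← add_div]
  rw [show (t : ℝ) + (1 - t) = 1 by ring]
  ring

lemma continuous_mob (k : ℝ) (hk : 0 < k) : Continuous (mob k hk) := by
  refine Continuous.subtype_mk (Continuous.div ?_ ?_ fun t => (mob_den hk t).ne') _ <;> fun_prop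

lemma exists_mob (a b : unitInterval) (ha : (0 : ℝ) < a) (ha1 : (a : ℝ) < 1)
    (hb : (0 : ℝ) < b) (hb1 : (b : ℝ) < 1) : ∃ k, ∃ hk : 0 < k, mob k hk a = b := by
  have h1 : 0 < 1 - (a : ℝ) := by linarith
  have h2 : 0 < 1 - (b : ℝ) := by linarith
  have hk : 0 < (a : ℝ) * (1 - b) / (b * (1 - a)) := by positivity
  refine ⟨_, hk, Subtype.ext ?_⟩
  have h3 := (mob_den hk a).ne'
  simp only [mob]
  rw [div_eq_iff h3]
  field_simp
  ring

lemma exists_cone (a : unitInterval) (ha : (a : ℝ) < 1) (u : HilbertCube) :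
    ∃ F, IsCone F a u := by
  classical
  by_cases h0 : a = 0
  · subst h0; exact ⟨_, isCone_F0 u⟩
  have ha0 : (0 : ℝ) < a := lt_of_le_of_ne a.2.1 (fun h => h0 (Subtype.ext h.symm))
  let s : ℕ → Prop := fun n => (u n : ℝ) < 0
  have hpos : ∀ n, (0 : ℝ) ≤ flipQ s u n := by
    intro n
    by_cases h : (u n : ℝ) < 0
    · simp only [flipQ, s, h, if_true, neg1]; linarith
    · simp only [flipQ, s, h, if_false]; linarith
  have hp : 0 < phi (flipQ s u) := by
    have h1 := phi_tail _ hpos 0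
    have h2 := cc_pos 0
    simp only [ps, Finset.range_zero, Finset.sum_empty] at h1
    linarith
  have hp1 := phi_le (flipQ s u)
  have c1 := (isCone_F0 (flipQ s u)).comp HH_cont HH_inj HH_surj HH_one (HH_zero _ hpos)
  obtain ⟨k, hk, hka⟩ := exists_mob ⟨phi (flipQ s u), phi_nonneg _, (phi_le _).trans (by norm_num)⟩
    a hp (by simp only; linarith) ha0 ha
  have hkl : k * k⁻¹ = 1 := mul_inv_cancel₀ hk.ne'
  have hlk : k⁻¹ * k = 1 := inv_mul_cancel₀ hk.ne'
  have hl : 0 < k⁻¹ := inv_pos.2 hk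
  have c2 := c1.comp (G := fun p => (mob k hk p.1, p.2)) (b := a) (v := flipQ s u)
    (((continuous_mob k hk).comp continuous_fst).prodMk continuous_snd)
    (fun p q h => by
      have h1 : mob k hk p.1 = mob k hk q.1 := congrArg Prod.fst h
      have h2 : p.2 = q.2 := (Prod.ext_iff.1 h).2
      exact Prod.ext (Function.LeftInverse.injective (mob_inv k k⁻¹ hk hl hkl) h1) h2)
    (fun p => ⟨(mob k⁻¹ hl p.1, p.2), Prod.ext (mob_inv k⁻¹ k hl hk hlk p.1) rfl⟩)
    (fun z => Prod.ext (Subtype.ext (by simp [mob])) rfl)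
    (Prod.ext hka rfl)
  have c3 := c2.flip s
  rw [flipQ_flipQ] at c3
  exact ⟨_, c3⟩

structure Good_s4 (f : HilbertCube → HilbertCube) (x y : HilbertCube) : Prop where
  cont : Continuous f
  surj : Function.Surjective f
  neg : ∀ z, (z 0 : ℝ) = -1 → f z = x
  pos : ∀ z, (z 0 : ℝ) = 1 → f z = y
  inj : ∀ z z', f z = f z' → z = z' ∨ ((z 0 : ℝ) = -1 ∧ (z' 0 : ℝ) = -1) ∨
    ((z 0 : ℝ) = 1 ∧ (z' 0 : ℝ) = 1)

lemma Good_s4.map {f : HilbertCube → HilbertCube} {x y : HilbertCube} (h : Good_s4 f x y)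
    (e : HilbertCube ≃ₜ HilbertCube) : Good_s4 (e ∘ f) (e x) (e y) where
  cont := e.continuous.comp h.cont
  surj := e.surjective.comp h.surj
  neg z hz := by simp [h.neg z hz]
  pos z hz := by simp [h.pos z hz]
  inj z z' hz := h.inj z z' (e.injective hz)

/-- prepend a coordinate -/
def consQ (a : Icc (-1 : ℝ) 1) (w : HilbertCube) : HilbertCube
  | 0 => a
  | n + 1 => w n

lemma continuous_consQ : Continuous fun p : Icc (-1 : ℝ) 1 × HilbertCube => consQ p.1 p.2 := by
  refine continuous_pi fun n => ?_
  cases n with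
  | zero => exact continuous_fst
  | succ n => exact (continuous_apply n).comp continuous_snd

lemma consQ_eta (z : HilbertCube) : consQ (z 0) (fun n => z (n + 1)) = z := by
  funext n; cases n <;> rfl

/-- clamp a real number to the unit interval -/
def clampU (t : ℝ) : unitInterval := Set.projIcc 0 1 zero_le_one t

lemma continuous_clampU : Continuous clampU := by
  unfold clampU; exact continuous_projIcc

lemma clampU_of {t : ℝ} (h : t ∈ Icc (0 : ℝ) 1) : clampU t = ⟨t, h⟩ := projIcc_of_mem _ h

/-- clamp a real number to `[-1,1]` -/
def clampJ (t : ℝ) : Icc (-1 : ℝ) 1 := Set.projIcc (-1) 1 (by norm_num) t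

lemma continuous_clampJ : Continuous clampJ := by
  unfold clampJ; exact continuous_projIcc

lemma clampJ_of {t : ℝ} (h : t ∈ Icc (-1 : ℝ) 1) : clampJ t = ⟨t, h⟩ := projIcc_of_mem _ h

lemma IsCone.fst_one {F : UQ → UQ} {a : unitInterval} {u : HilbertCube} (hF : IsCone F a u)
    (p : UQ) (h : (F p).1 = 1) : p.1 = 1 := by
  have h1 : F p = F (1, (F p).2) := by
    rw [hF.one]; exact Prod.ext h rfl
  exact (hF.inj _ _ h1).1

/-- half of the glued map: `c` the end value, `m` the middle value. -/
def half (F : UQ → UQ) (c m : ℝ) (t : ℝ) (z : HilbertCube) : HilbertCube :=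
  consQ (clampJ (c + (F (clampU t, z)).1 * (m - c))) (F (clampU t, z)).2

lemma continuous_half {F : UQ → UQ} (hF : Continuous F) (c m : ℝ)
    {t : HilbertCube → ℝ} (ht : Continuous t) :
    Continuous fun z : HilbertCube => half F c m (t z) (fun n => z (n + 1)) := by
  have h1 : Continuous fun z : HilbertCube =>
      F (clampU (t z), (fun n => z (n + 1))) :=
    hF.comp ((continuous_clampU.comp ht).prodMk (by fun_prop))
  refine continuous_consQ.comp (Continuous.prodMk (continuous_clampJ.comp ?_) ?_)
  · exact continuous_const.add
      ((continuous_subtype_val.comp (continuous_fst.comp h1)).mul continuous_const)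
  · exact continuous_snd.comp h1

lemma between {c m : ℝ} (hc : c ∈ Icc (-1 : ℝ) 1) (hm : m ∈ Icc (-1 : ℝ) 1) (s : unitInterval) :
    c + s * (m - c) ∈ Icc (-1 : ℝ) 1 := by
  have h1 := s.2.1
  have h2 := s.2.2
  obtain ⟨h3, h4⟩ := hc
  obtain ⟨h5, h6⟩ := hm
  constructor <;> nlinarith

lemma half_zero (F : UQ → UQ) {c m : ℝ} (hc : c ∈ Icc (-1 : ℝ) 1) (hm : m ∈ Icc (-1 : ℝ) 1)
    (t : ℝ) (z : HilbertCube) :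
    (half F c m t z 0 : ℝ) = c + (F (clampU t, z)).1 * (m - c) := by
  simp only [half, consQ, clampJ_of (between hc hm _)]

lemma half_succ (F : UQ → UQ) (c m t : ℝ) (z : HilbertCube) :
    (fun n => half F c m t z (n + 1)) = (F (clampU t, z)).2 := rfl

lemma half_inj {F : UQ → UQ} {a : unitInterval} {u : HilbertCube} (hF : IsCone F a u)
    {c m : ℝ} (hc : c ∈ Icc (-1 : ℝ) 1) (hm : m ∈ Icc (-1 : ℝ) 1) (hcm : m ≠ c) {t t' : ℝ}
    {z z' : HilbertCube} (ht : t ∈ Icc (0 : ℝ) 1) (ht' : t' ∈ Icc (0 : ℝ) 1)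
    (h : half F c m t z = half F c m t' z') : t = t' ∧ (t = 0 ∨ z = z') := by
  have h0 : (half F c m t z 0 : ℝ) = half F c m t' z' 0 := by rw [h]
  have h1 : (fun n => half F c m t z (n + 1)) = fun n => half F c m t' z' (n + 1) := by rw [h]
  rw [half_zero F hc hm, half_zero F hc hm] at h0
  rw [half_succ, half_succ] at h1
  have h2 := mul_right_cancel₀ (sub_ne_zero.2 hcm) (add_left_cancel h0)
  have h3 := hF.inj _ _ (Prod.ext (Subtype.ext h2) h1)
  rw [clampU_of ht, clampU_of ht'] at h3
  exact ⟨congrArg Subtype.val h3.1, h3.2.imp (congrArg Subtype.val) id⟩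

lemma half_m {F : UQ → UQ} {a : unitInterval} {u : HilbertCube} (hF : IsCone F a u)
    {c m : ℝ} (hc : c ∈ Icc (-1 : ℝ) 1) (hm : m ∈ Icc (-1 : ℝ) 1) (hcm : m ≠ c) {t : ℝ}
    {z : HilbertCube} (ht : t ∈ Icc (0 : ℝ) 1) (h : (half F c m t z 0 : ℝ) = m) : t = 1 := by
  rw [half_zero F hc hm] at h
  have h2 : ((F (clampU t, z)).1 : ℝ) = 1 :=
    mul_right_cancel₀ (sub_ne_zero.2 hcm) (by linarith)
  have h3 := hF.fst_one _ (Subtype.ext h2)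
  rw [clampU_of ht] at h3
  exact congrArg Subtype.val h3

lemma half_one {F : UQ → UQ} {a : unitInterval} {u : HilbertCube} (hF : IsCone F a u)
    (c m : ℝ) (z : HilbertCube) : half F c m 1 z = consQ (clampJ m) z := by
  have : clampU 1 = 1 := clampU_of (by norm_num)
  simp [half, this, hF.one]

lemma half_apex {F : UQ → UQ} {a : unitInterval} {x : HilbertCube}
    (hF : IsCone F a (fun n => x (n + 1)))
    {c m : ℝ} (hx : c + a * (m - c) = x 0) (z : HilbertCube) : half F c m 0 z = x := by
  have : clampU 0 = 0 := clampU_of (by norm_num)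
  simp only [half, this, hF.zero, hx]
  rw [clampJ_of (x 0).2]
  exact consQ_eta x

lemma half_surj {F : UQ → UQ} {a : unitInterval} {u : HilbertCube} (hF : IsCone F a u)
    {c m : ℝ} (hcm : m ≠ c) (q : HilbertCube) (hq : ((q 0 : ℝ) - c) / (m - c) ∈ Icc (0 : ℝ) 1) :
    ∃ t ∈ Icc (0 : ℝ) 1, ∃ z, half F c m t z = q := by
  obtain ⟨⟨t, z⟩, hp⟩ := hF.surj (⟨_, hq⟩, fun n => q (n + 1))
  refine ⟨t, t.2, z, ?_⟩
  have : clampU t = t := clampU_of t.2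
  simp only [half, this, hp]
  rw [div_mul_cancel₀ _ (sub_ne_zero.2 hcm), add_sub_cancel, clampJ_of (q 0).2]
  exact consQ_eta q

lemma exists_good_lt (x y : HilbertCube) (h : (x 0 : ℝ) < y 0) : ∃ f, Good_s4 f x y := by
  have hx1 := (x 0).2.1
  have hy1 := (y 0).2.2
  obtain ⟨m, hm1, hm2⟩ := exists_between h
  have hm : m ∈ Icc (-1 : ℝ) 1 := ⟨by linarith, by linarith⟩
  have hc1 : (-1 : ℝ) ∈ Icc (-1 : ℝ) 1 := by norm_num
  have hc2 : (1 : ℝ) ∈ Icc (-1 : ℝ) 1 := by norm_num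
  have hn1 : m ≠ -1 := by linarith
  have hn2 : m ≠ 1 := by linarith
  have ha : ((x 0 : ℝ) - -1) / (m - -1) ∈ Icc (0 : ℝ) 1 :=
    ⟨div_nonneg (by linarith) (by linarith), by rw [div_le_one (by linarith)]; linarith⟩
  have hb : ((y 0 : ℝ) - 1) / (m - 1) ∈ Icc (0 : ℝ) 1 :=
    ⟨div_nonneg_of_nonpos (by linarith) (by linarith),
      by rw [div_le_one_of_neg (by linarith)]; linarith⟩
  obtain ⟨F, hF⟩ := exists_cone ⟨_, ha⟩ (by simp only; rw [div_lt_one (by linarith)]; linarith)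
    (fun n => x (n + 1))
  obtain ⟨G, hG⟩ := exists_cone ⟨_, hb⟩
    (by simp only; rw [div_lt_one_of_neg (by linarith)]; linarith) (fun n => y (n + 1))
  have hFx : ∀ z, half F (-1) m 0 z = x := half_apex hF (by
    simp only; rw [div_mul_cancel₀ _ (sub_ne_zero.2 hn1)]; ring)
  have hGy : ∀ z, half G 1 m 0 z = y := half_apex hG (by
    simp only; rw [div_mul_cancel₀ _ (sub_ne_zero.2 hn2)]; ring)
  let f : HilbertCube → HilbertCube := fun z =>
    if (z 0 : ℝ) ≤ 0 then half F (-1) m (1 + z 0) (fun n => z (n + 1))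
    else half G 1 m (1 - z 0) (fun n => z (n + 1))
  have f1 : ∀ z : HilbertCube, (z 0 : ℝ) ≤ 0 →
      f z = half F (-1) m (1 + z 0) (fun n => z (n + 1)) := fun z hz => if_pos hz
  have f2 : ∀ z : HilbertCube, (0 : ℝ) ≤ z 0 →
      f z = half G 1 m (1 - z 0) (fun n => z (n + 1)) := by
    intro z hz
    rcases hz.eq_or_lt with hz | hz
    · rw [f1 z hz.symm.le, ← hz, add_zero, sub_zero, half_one hF, half_one hG]
    · exact if_neg (not_le.2 hz)
  have ht1 : ∀ z : HilbertCube, (z 0 : ℝ) ≤ 0 → 1 + (z 0 : ℝ) ∈ Icc (0 : ℝ) 1 := fun z hz =>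
    ⟨by linarith [(z 0).2.1], by linarith⟩
  have ht2 : ∀ z : HilbertCube, (0 : ℝ) ≤ z 0 → 1 - (z 0 : ℝ) ∈ Icc (0 : ℝ) 1 := fun z hz =>
    ⟨by linarith [(z 0).2.2], by linarith⟩
  have ext0 : ∀ z z' : HilbertCube, (z 0 : ℝ) = z' 0 →
      (fun n => z (n + 1)) = (fun n => z' (n + 1)) → z = z' := by
    intro z z' h0 h1
    rw [← consQ_eta z, ← consQ_eta z', h1, Subtype.ext h0]
  have cross : ∀ z z' : HilbertCube, (z 0 : ℝ) ≤ 0 → (0 : ℝ) < z' 0 → f z ≠ f z' := by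
    intro z z' hz hz' he
    rw [f1 z hz, f2 z' hz'.le] at he
    have e1 := half_zero F hc1 hm (1 + z 0) (fun n => z (n + 1))
    have e2 := half_zero G hc2 hm (1 - z' 0) (fun n => z' (n + 1))
    have h3 := (F (clampU (1 + z 0), fun n => z (n + 1))).1.2.2
    have h4 := (G (clampU (1 - z' 0), fun n => z' (n + 1))).1.2.2
    rw [he] at e1
    have h5 : (half G 1 m (1 - z' 0) (fun n => z' (n + 1)) 0 : ℝ) = m := by
      apply le_antisymm
      · rw [e1]; nlinarith
      · rw [e2]; nlinarith
    have := half_m hG hc2 hm hn2 (ht2 z' hz'.le) h5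
    linarith
  refine ⟨f, ?_, ?_, ?_, ?_, ?_⟩
  · refine Continuous.if_le (continuous_half hF.cont (-1) m (by fun_prop))
      (continuous_half hG.cont 1 m (by fun_prop)) (by fun_prop) continuous_const ?_
    intro z hz
    rw [← f1 z hz.le, ← f2 z hz.ge]
  · intro q
    have hq1 := (q 0).2.1
    have hq2 := (q 0).2.2
    rcases le_total (q 0 : ℝ) m with hq | hq
    · obtain ⟨t, ht, z, hz⟩ := half_surj hF hn1 q
        ⟨div_nonneg (by linarith) (by linarith), by rw [div_le_one (by linarith)]; linarith⟩
      refine ⟨consQ ⟨t - 1, by linarith [ht.1], by linarith [ht.2]⟩ z, ?_⟩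
      rw [f1 _ (by simp only [consQ]; linarith [ht.2])]
      simp only [consQ, add_sub_cancel]
      exact hz
    · obtain ⟨t, ht, z, hz⟩ := half_surj hG hn2 q
        ⟨div_nonneg_of_nonpos (by linarith) (by linarith),
          by rw [div_le_one_of_neg (by linarith)]; linarith⟩
      refine ⟨consQ ⟨1 - t, by linarith [ht.2], by linarith [ht.1]⟩ z, ?_⟩
      rw [f2 _ (by simp only [consQ]; linarith [ht.2])]
      simp only [consQ, sub_sub_cancel]
      exact hz
  · intro z hz
    rw [f1 z (by linarith), hz, add_neg_cancel, hFx]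
  · intro z hz
    rw [f2 z (by linarith), hz, sub_self, hGy]
  · intro z z' he
    rcases le_or_gt (z 0 : ℝ) 0 with hz | hz <;> rcases le_or_gt (z' 0 : ℝ) 0 with hz' | hz'
    · rw [f1 z hz, f1 z' hz'] at he
      obtain ⟨h1, h2⟩ := half_inj hF hc1 hm hn1 (ht1 z hz) (ht1 z' hz') he
      rcases h2 with h2 | h2
      · right; left; constructor <;> linarith
      · left; exact ext0 z z' (by linarith) h2
    · exact absurd he (cross z z' hz hz')
    · exact absurd he.symm (cross z' z hz' hz)
    · rw [f2 z hz.le, f2 z' hz'.le] at he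
      obtain ⟨h1, h2⟩ := half_inj hG hc2 hm hn2 (ht2 z hz.le) (ht2 z' hz'.le) he
      rcases h2 with h2 | h2
      · right; right; constructor <;> linarith
      · left; exact ext0 z z' (by linarith) h2

/-- the flip as a homeomorphism -/
def flipHomeo (s : ℕ → Prop) [DecidablePred s] : HilbertCube ≃ₜ HilbertCube where
  toFun := flipQ s
  invFun := flipQ s
  left_inv := flipQ_flipQ s
  right_inv := flipQ_flipQ s
  continuous_toFun := continuous_flipQ s
  continuous_invFun := continuous_flipQ s

/-- swap the coordinates `0` and `k` -/
def swapHomeo (k : ℕ) : HilbertCube ≃ₜ HilbertCube where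
  toFun z := fun n => z (Equiv.swap 0 k n)
  invFun z := fun n => z (Equiv.swap 0 k n)
  left_inv z := by funext n; simp
  right_inv z := by funext n; simp
  continuous_toFun := by fun_prop
  continuous_invFun := by fun_prop

lemma exists_good_zero (x y : HilbertCube) (h : (x 0 : ℝ) ≠ y 0) : ∃ f, Good_s4 f x y := by
  rcases lt_or_gt_of_ne h with h | h
  · exact exists_good_lt x y h
  · obtain ⟨f, hf⟩ := exists_good_lt (flipHomeo (fun _ => True) x) (flipHomeo (fun _ => True) y)
      (by
        change ((flipQ (fun _ => True) x 0 : Icc (-1 : ℝ) 1) : ℝ) < flipQ (fun _ => True) y 0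
        simp only [flipQ, if_true, neg1]
        linarith)
    have := hf.map (flipHomeo (fun _ => True))
    have e : ∀ z, flipHomeo (fun _ => True) (flipHomeo (fun _ => True) z) = z :=
      flipQ_flipQ (fun _ => True)
    rw [e, e] at this
    exact ⟨_, this⟩

lemma exists_good (x y : HilbertCube) (h : x ≠ y) : ∃ f, Good_s4 f x y := by
  obtain ⟨k, hk⟩ := Function.ne_iff.1 h
  have e0 : ∀ z, swapHomeo k z 0 = z k := fun z => by
    change z (Equiv.swap 0 k 0) = z k
    rw [Equiv.swap_apply_left]
  obtain ⟨f, hf⟩ := exists_good_zero (swapHomeo k x) (swapHomeo k y) (by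
    rw [e0, e0]; exact fun h => hk (Subtype.ext h))
  have := hf.map (swapHomeo k)
  have e : ∀ z, swapHomeo k (swapHomeo k z) = z := (swapHomeo k).left_inv
  rw [e, e] at this
  exact ⟨_, this⟩

end

/-- For distinct points `x, y` of the Hilbert cube there is a continuous map
`f : Q → Q` with `f(W_1^-) = {x}`, `f(W_1^+) = {y}`, whose restriction to
`Q \ (W_1^- ∪ W_1^+)` is a homeomorphism onto `Q \ {x, y}`. -/
theorem exists_quotient_map_collapsing_faces (x y : HilbertCube) (hxy : x ≠ y) :
    ∃ f : HilbertCube → HilbertCube, Continuous f ∧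
      f '' negFace 0 = {x} ∧ f '' posFace 0 = {y} ∧
      ∃ g : (((negFace 0 ∪ posFace 0)ᶜ : Set HilbertCube) ≃ₜ
          (({x, y} : Set HilbertCube)ᶜ : Set HilbertCube)),
        ∀ z : ((negFace 0 ∪ posFace 0)ᶜ : Set HilbertCube), (g z : HilbertCube) = f z := by
  obtain ⟨f, hf⟩ := exists_good x y hxy
  let zn : HilbertCube := fun _ => ⟨-1, by norm_num⟩
  let zp : HilbertCube := fun _ => ⟨1, by norm_num⟩
  have hx : ∀ z, f z = x ↔ z ∈ negFace 0 := by
    intro z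
    refine ⟨fun h => ?_, fun h => hf.neg z h⟩
    rcases hf.inj z zn (h.trans (hf.neg zn rfl).symm) with h1 | h1 | h1
    · rw [h1]; rfl
    · exact h1.1
    · exact absurd h1.2 (by simp only [zn]; norm_num)
  have hy : ∀ z, f z = y ↔ z ∈ posFace 0 := by
    intro z
    refine ⟨fun h => ?_, fun h => hf.pos z h⟩
    rcases hf.inj z zp (h.trans (hf.pos zp rfl).symm) with h1 | h1 | h1
    · rw [h1]; rfl
    · exact absurd h1.2 (by simp only [zp]; norm_num)
    · exact h1.1
  refine ⟨f, hf.cont, ?_, ?_, ?_⟩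
  · ext q
    constructor
    · rintro ⟨z, hz, rfl⟩; exact (hx z).2 hz
    · rintro rfl; exact ⟨zn, rfl, hf.neg zn rfl⟩
  · ext q
    constructor
    · rintro ⟨z, hz, rfl⟩; exact (hy z).2 hz
    · rintro rfl; exact ⟨zp, rfl, hf.pos zp rfl⟩
  · have hpre : ((negFace 0 ∪ posFace 0)ᶜ : Set HilbertCube) = f ⁻¹' ({x, y} : Set HilbertCube)ᶜ := by
      ext z
      simp only [mem_compl_iff, mem_union, mem_preimage, mem_insert_iff, mem_singleton_iff, hx, hy]
    have hcl : IsClosedMap f := hf.cont.isClosedMap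
    have hh : IsHomeomorph ((({x, y} : Set HilbertCube)ᶜ).restrictPreimage f) := by
      rw [isHomeomorph_iff_continuous_isClosedMap_bijective]
      refine ⟨hf.cont.restrictPreimage, hcl.restrictPreimage _, ?_,
        Set.restrictPreimage_surjective _ hf.surj⟩
      rintro ⟨z, hz⟩ ⟨z', hz'⟩ he
      have he' : f z = f z' := congrArg Subtype.val he
      rw [← hpre] at hz
      apply Subtype.ext
      rcases hf.inj z z' he' with h1 | h1 | h1
      · exact h1
      · exact absurd (Or.inl h1.1) hz
      · exact absurd (Or.inr h1.1) hz
    exact ⟨(Homeomorph.setCongr hpre).trans hh.homeomorph, fun z => rfl⟩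
end

section
/- Let x and y be two distinct points of the Hilbert cube Q and let S ⊆ Q be a set with x, y ∈ Q \ S such that S intersects every continuum containing both x and y. Then S (with the subspace topology) is strongly infinite dimensional. -/
open Set

namespace HC

def E (j : ℕ) : ℕ → ℕ := Pi.single j 1

@[simp] lemma E_same (j : ℕ) : E j j = 1 := by simp [E]

@[simp] lemma E_ne {i j : ℕ} (h : i ≠ j) : E j i = 0 := by simp [E, h]

def eta (a : ℕ → (ℕ → ℕ) → ZMod 2) : ℕ → Finset ℕ → (ℕ → ℕ) → ZMod 2
  | 0, _, _ => 1
  | k + 1, J, v => ∑ j ∈ J, (a k (v + E j) + a k v) *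
      eta a k (J.erase j) (v + E j)

lemma add_self2 (x : ZMod 2) : x + x = 0 := CharTwo.add_self_eq_zero x

lemma sum_swap (J : Finset ℕ) (F : ℕ → ℕ → ZMod 2) :
    ∑ j ∈ J, ∑ l ∈ J.erase j, F j l = ∑ j ∈ J, ∑ l ∈ J.erase j, F l j := by
  apply Finset.sum_comm'
  intro x y
  simp only [Finset.mem_erase]
  tauto

lemma sum_symm (J : Finset ℕ) (F : ℕ → ℕ → ZMod 2) (h : ∀ j l, F j l = F l j) :
    ∑ j ∈ J, ∑ l ∈ J.erase j, F j l = 0 := by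
  rw [Finset.sum_sigma']
  apply Finset.sum_involution (fun x _ => ⟨x.2, x.1⟩)
  · rintro ⟨j, l⟩ _
    simp only
    rw [h j l]; exact add_self2 _
  · rintro ⟨j, l⟩ hm _ he
    simp only [Finset.mem_sigma, Finset.mem_erase] at hm
    simp only [Sigma.mk.injEq] at he
    exact hm.2.1 he.1
  · rintro ⟨j, l⟩ _
    rfl
  · rintro ⟨j, l⟩ hm
    simp only [Finset.mem_sigma, Finset.mem_erase] at hm ⊢
    exact ⟨hm.2.2, Ne.symm hm.2.1, hm.1⟩

lemma eta_closed (a : ℕ → (ℕ → ℕ) → ZMod 2) (k : ℕ) : ∀ (J : Finset ℕ) (v : ℕ → ℕ),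
    ∑ j ∈ J, eta a k (J.erase j) (v + E j) = ∑ j ∈ J, eta a k (J.erase j) v := by
  induction k with
  | zero => intro J v; simp [eta]
  | succ k ih =>
    intro J v
    simp only [eta, add_mul, Finset.sum_add_distrib]
    rw [sum_symm J (fun j l => a k (v + E j + E l) *
      eta a k ((J.erase j).erase l) (v + E j + E l))]
    swap
    · intro j l
      rw [Finset.erase_right_comm, add_right_comm]
    simp only [← Finset.mul_sum, ih]
    rw [sum_symm J (fun j l => eta a k ((J.erase j).erase l) v)]
    swap
    · intro j l
      rw [Finset.erase_right_comm]
    rw [sum_swap J (fun j l => a k (v + E l) *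
      eta a k ((J.erase j).erase l) (v + E l))]
    simp only [zero_add, mul_zero, add_zero, Finset.mul_sum]
    refine Finset.sum_congr rfl fun j _ => Finset.sum_congr rfl fun l _ => ?_
    rw [Finset.erase_right_comm]

def boxSum (N : ℕ) : ℕ → ((ℕ → ℕ) → ZMod 2) → (ℕ → ℕ) → ZMod 2
  | 0, F, c => F c
  | k + 1, F, c => ∑ t ∈ Finset.range N, boxSum N k F (Function.update c k t)

lemma boxSum_add (N k : ℕ) (F G : (ℕ → ℕ) → ZMod 2) : ∀ c,
    boxSum N k (fun v => F v + G v) c = boxSum N k F c + boxSum N k G c := by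
  induction k with
  | zero => intro c; rfl
  | succ k ih => intro c; simp only [boxSum, ih, Finset.sum_add_distrib]

lemma boxSum_sum (N k : ℕ) (J : Finset ℕ) (F : ℕ → (ℕ → ℕ) → ZMod 2) : ∀ c,
    boxSum N k (fun v => ∑ j ∈ J, F j v) c = ∑ j ∈ J, boxSum N k (F j) c := by
  induction k with
  | zero => intro c; rfl
  | succ k ih => intro c; simp only [boxSum, ih]; exact Finset.sum_comm

lemma boxSum_congr (N k : ℕ) (F G : (ℕ → ℕ) → ZMod 2) : ∀ c : ℕ → ℕ,
    (∀ v, (∀ j, k ≤ j → v j = c j) → F v = G v) → boxSum N k F c = boxSum N k G c := by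
  induction k with
  | zero => intro c h; exact h c (fun _ _ => rfl)
  | succ k ih =>
    intro c h
    simp only [boxSum]
    refine Finset.sum_congr rfl fun t _ => ih _ fun v hv => h v fun j hj => ?_
    rw [hv j (by omega), Function.update_of_ne (by omega)]

lemma boxSum_zero (N k : ℕ) : ∀ c, boxSum N k (fun _ => 0) c = 0 := by
  induction k with
  | zero => intro c; rfl
  | succ k ih => intro c; simp [boxSum, ih]

lemma boxSum_shift (N k j : ℕ) (hj : k ≤ j) (F : (ℕ → ℕ) → ZMod 2) : ∀ c : ℕ → ℕ,
    boxSum N k (fun v => F (v + E j)) c = boxSum N k F (c + E j) := by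
  induction k with
  | zero => intro c; rfl
  | succ k ih =>
    intro c
    simp only [boxSum]
    refine Finset.sum_congr rfl fun t _ => ?_
    rw [ih (by omega)]
    congr 1
    ext i
    by_cases h : i = k
    · subst h
      have : i ≠ j := by omega
      simp [this]
    · simp [h]

lemma tele (N : ℕ) (G : ℕ → ZMod 2) :
    ∑ t ∈ Finset.range N, (G (t + 1) + G t) = G N + G 0 := by
  induction N with
  | zero => simp [add_self2]
  | succ n ih =>
    rw [Finset.sum_range_succ, ih]
    have := add_self2 (G n)
    linear_combination this

lemma boxSum_tele_last (N k : ℕ) (g : (ℕ → ℕ) → ZMod 2) (c : ℕ → ℕ) :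
    boxSum N (k + 1) (fun v => g (v + E k) + g v) c =
      boxSum N k g (Function.update c k N) + boxSum N k g (Function.update c k 0) := by
  simp only [boxSum, boxSum_add]
  rw [← tele N (fun t => boxSum N k g (Function.update c k t))]
  refine Finset.sum_congr rfl fun t _ => ?_
  rw [boxSum_shift N k k le_rfl]
  congr 2
  ext i
  by_cases h : i = k
  · subst h; simp
  · simp [h]

lemma boxSum_tele (N j : ℕ) (g : (ℕ → ℕ) → ZMod 2)
    (h0 : ∀ v : ℕ → ℕ, v j = 0 → g v = 0) (h1 : ∀ v : ℕ → ℕ, v j = N → g v = 0) (k : ℕ)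
    (hj : j < k) : ∀ c, boxSum N k (fun v => g (v + E j) + g v) c = 0 := by
  induction k, hj using Nat.le_induction with
  | base =>
    intro c
    rw [Nat.succ_eq_add_one, boxSum_tele_last]
    rw [boxSum_congr N j g (fun _ => 0), boxSum_congr N j g (fun _ => 0) (Function.update c j 0)]
    · simp [boxSum_zero]
    · intro v hv
      exact h0 v (by rw [hv j le_rfl]; simp)
    · intro v hv
      exact h1 v (by rw [hv j le_rfl]; simp)
  | succ k hk ih =>
    intro c
    simp only [boxSum]
    exact Finset.sum_eq_zero fun t _ => ih _

lemma eta_face (a : ℕ → (ℕ → ℕ) → ZMod 2) (j m : ℕ) (z : ZMod 2)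
    (h : ∀ v : ℕ → ℕ, v j = m → a j v = z) (k : ℕ) (hk : j < k) :
    ∀ (J : Finset ℕ), j ∉ J → ∀ v : ℕ → ℕ, v j = m → eta a k J v = 0 := by
  induction k, hk using Nat.le_induction with
  | base =>
    intro J hJ v hv
    simp only [eta]
    refine Finset.sum_eq_zero fun l hl => ?_
    have : j ≠ l := fun e => hJ (e ▸ hl)
    rw [h v hv, h (v + E l) (by simp [this, hv]), add_self2, zero_mul]
  | succ k hk ih =>
    intro J hJ v hv
    simp only [eta]
    refine Finset.sum_eq_zero fun l hl => ?_
    have : j ≠ l := fun e => hJ (e ▸ hl)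
    rw [ih (J.erase l) (fun h => hJ (Finset.mem_of_mem_erase h)) (v + E l)
      (by simp [this, hv]), mul_zero]

lemma main_sum (a : ℕ → (ℕ → ℕ) → ZMod 2) (N : ℕ)
    (h0 : ∀ j, ∀ v : ℕ → ℕ, v j = 0 → a j v = 0) (h1 : ∀ j, ∀ v : ℕ → ℕ, v j = N → a j v = 1)
    (k : ℕ) : ∀ c, boxSum N k (eta a k (Finset.range k)) c = 1 := by
  induction k with
  | zero => intro c; rfl
  | succ k ih =>
    intro c
    have e : eta a (k + 1) (Finset.range (k + 1)) = fun v => ∑ j ∈ Finset.range (k + 1),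
        ((fun w => a k w * eta a k ((Finset.range (k + 1)).erase j) w) (v + E j) +
        (fun w => a k w * eta a k ((Finset.range (k + 1)).erase j) w) v) := by
      funext v
      simp only [eta, add_mul, Finset.sum_add_distrib, ← Finset.mul_sum, eta_closed]
    rw [e, boxSum_sum, Finset.sum_range_succ, Finset.sum_eq_zero, zero_add,
      boxSum_tele_last N k (fun w => a k w * eta a k ((Finset.range (k + 1)).erase k) w)]
    · rw [boxSum_congr N k _ (fun _ => 0) (Function.update c k 0), boxSum_zero, add_zero,
        boxSum_congr N k _ (eta a k (Finset.range k)), ih]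
      · intro v hv
        rw [h1 k v (by rw [hv k le_rfl]; simp), one_mul, Finset.range_add_one,
          Finset.erase_insert (by simp)]
      · intro v hv
        rw [h0 k v (by rw [hv k le_rfl]; simp), zero_mul]
    · intro j hj
      have hj := Finset.mem_range.1 hj
      apply boxSum_tele N j (fun w => a k w * eta a k ((Finset.range (k + 1)).erase j) w)
      · intro v hv
        rw [eta_face a j 0 0 (h0 j) k hj _ (by simp) v hv, mul_zero]
      · intro v hv
        rw [eta_face a j N 1 (h1 j) k hj _ (by simp) v hv, mul_zero]
      · omega

lemma eta_ne (a : ℕ → (ℕ → ℕ) → ZMod 2) (k : ℕ) : ∀ (J : Finset ℕ) (v : ℕ → ℕ),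
    eta a k J v ≠ 0 → ∀ i < k, ∃ w w' : ℕ → ℕ, (∀ j, v j ≤ w j ∧ w j ≤ v j + 1) ∧
      (∀ j, v j ≤ w' j ∧ w' j ≤ v j + 1) ∧ (∀ j ∉ J, w j = v j ∧ w' j = v j) ∧ a i w ≠ a i w' := by
  induction k with
  | zero => intro _ _ _ i hi; omega
  | succ k ih =>
    intro J v h i hi
    simp only [eta] at h
    obtain ⟨l, hl, h⟩ := Finset.exists_ne_zero_of_sum_ne_zero h
    have hA := left_ne_zero_of_mul h
    have hB := right_ne_zero_of_mul h
    by_cases hik : i = k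
    · subst hik
      refine ⟨v + E l, v, ?_, ?_, ?_, ?_⟩
      · intro j; by_cases hh : j = l <;> simp [hh]
      · intro j; omega
      · intro j hj
        have : j ≠ l := fun e => hj (e ▸ hl)
        simp [this]
      · intro e
        rw [e, add_self2] at hA
        exact hA rfl
    · obtain ⟨w, w', h1, h2, h3, h4⟩ := ih _ _ hB i (by omega)
      have key : ∀ u : ℕ → ℕ, (∀ j, (v + E l) j ≤ u j ∧ u j ≤ (v + E l) j + 1) →
          u l = (v + E l) l → ∀ j, v j ≤ u j ∧ u j ≤ v j + 1 := by
        intro u hu hul j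
        by_cases hh : j = l
        · subst hh
          simp at hul
          omega
        · have := hu j
          simpa [hh] using this
      refine ⟨w, w', key w h1 (h3 l (by simp)).1, key w' h2 (h3 l (by simp)).2, ?_, h4⟩
      intro j hj
      have hjl : j ≠ l := fun e => hj (e ▸ hl)
      have := h3 j (fun hh => hj (Finset.mem_of_mem_erase hh))
      simpa [hjl] using this

lemma exists_cell (a : ℕ → (ℕ → ℕ) → ZMod 2) (N : ℕ)
    (h0 : ∀ j, ∀ v : ℕ → ℕ, v j = 0 → a j v = 0) (h1 : ∀ j, ∀ v : ℕ → ℕ, v j = N → a j v = 1)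
    (n : ℕ) : ∃ v : ℕ → ℕ, ∀ i < n, ∃ w w' : ℕ → ℕ, (∀ j, v j ≤ w j ∧ w j ≤ v j + 1) ∧
      (∀ j, v j ≤ w' j ∧ w' j ≤ v j + 1) ∧ a i w = 0 ∧ a i w' ≠ 0 := by
  have : ∃ v, eta a n (Finset.range n) v ≠ 0 := by
    by_contra! hc
    have := main_sum a N h0 h1 n 0
    rw [funext hc, boxSum_zero] at this
    exact zero_ne_one this
  obtain ⟨v, hv⟩ := this
  refine ⟨v, fun i hi => ?_⟩
  obtain ⟨w, w', h1, h2, -, h4⟩ := eta_ne a n _ v hv i hi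
  by_cases hw : a i w = 0
  · exact ⟨w, w', h1, h2, hw, fun e => h4 (hw.trans e.symm)⟩
  · refine ⟨w', w, h2, h1, ?_, hw⟩
    revert h4 hw
    generalize a i w = p
    generalize a i w' = q
    revert p q
    decide


/-! ### Essentiality of the faces of the Hilbert cube -/

noncomputable def pt (N : ℕ) (v : ℕ → ℕ) : HilbertCube := fun j =>
  projIcc (-1) 1 (by norm_num) (-1 + 2 * (v j : ℝ) / N)

lemma pt_dist (N : ℕ) (v w : ℕ → ℕ) (j : ℕ) (h : v j ≤ w j ∧ w j ≤ v j + 1) :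
    |(pt N w j : ℝ) - pt N v j| ≤ 2 / N := by
  unfold pt
  refine (Set.abs_projIcc_sub_projIcc _).trans ?_
  have h1 : (v j : ℝ) ≤ w j := by exact_mod_cast h.1
  have h2 : (w j : ℝ) ≤ v j + 1 := by exact_mod_cast h.2
  have : (-1 + 2 * (w j : ℝ) / N) - (-1 + 2 * (v j : ℝ) / N) = 2 / N * (w j - v j) := by ring
  rw [this, abs_mul, abs_of_nonneg (by positivity : (0 : ℝ) ≤ 2 / N)]
  have h3 : |(w j : ℝ) - v j| ≤ 1 := by rw [abs_le]; constructor <;> linarith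
  exact mul_le_of_le_one_right (by positivity) h3

lemma exists_approx (U V : ℕ → Set HilbertCube)
    (hUV : ∀ i, Disjoint (U i) (V i)) (hA : ∀ i, negFace i ⊆ U i) (hB : ∀ i, posFace i ⊆ V i)
    (n : ℕ) : ∃ x : HilbertCube, ∀ i < n,
      (∃ w ∈ U i, ∀ j, |(w j : ℝ) - x j| ≤ 2 / ((n : ℝ) + 1)) ∧
      (∃ w ∈ (U i)ᶜ, ∀ j, |(w j : ℝ) - x j| ≤ 2 / ((n : ℝ) + 1)) := by
  classical
  obtain ⟨v, hv⟩ := exists_cell (fun i v => if pt (n + 1) v ∈ U i then 0 else 1) (n + 1)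
    (by
      intro j v hv
      rw [if_pos]
      apply hA
      simp [negFace, pt, hv])
    (by
      intro j v hv
      rw [if_neg]
      refine fun h => disjoint_left.1 (hUV j) h (hB j ?_)
      have : (n : ℝ) + 1 ≠ 0 := by positivity
      simp only [posFace, pt, hv, mem_ofPred_eq]
      push_cast
      rw [mul_div_assoc, div_self this]
      norm_num) n
  refine ⟨pt (n + 1) v, fun i hi => ?_⟩
  obtain ⟨w, w', h1, h2, h3, h4⟩ := hv i hi
  refine ⟨⟨pt (n + 1) w, ?_, fun j => ?_⟩, ⟨pt (n + 1) w', ?_, fun j => ?_⟩⟩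
  · by_contra hc
    simp [hc] at h3
  · simpa using pt_dist (n + 1) v w j (h1 j)
  · intro hc
    simp [hc] at h4
  · simpa using pt_dist (n + 1) v w' j (h2 j)

lemma mem_closure_approx (T : Set HilbertCube) (i : ℕ) (x : ℕ → HilbertCube) (φ : ℕ → ℕ)
    (hφ : StrictMono φ) (p : HilbertCube) (hp : Filter.Tendsto (x ∘ φ) Filter.atTop (nhds p))
    (h : ∀ n, i < n → ∃ w ∈ T, ∀ j, |(w j : ℝ) - x n j| ≤ 2 / ((n : ℝ) + 1)) :
    p ∈ closure T := by
  have h' : ∀ n, ∃ w : HilbertCube, i < n → w ∈ T ∧ ∀ j, |(w j : ℝ) - x n j| ≤ 2 / ((n : ℝ) + 1) := by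
    intro n
    by_cases hn : i < n
    · obtain ⟨w, hw⟩ := h n hn
      exact ⟨w, fun _ => hw⟩
    · exact ⟨p, fun hh => absurd hh hn⟩
  choose w hw using h'
  have hev : ∀ᶠ m in Filter.atTop, i < φ m := hφ.tendsto_atTop.eventually_gt_atTop i
  refine mem_closure_of_tendsto (f := w ∘ φ) (b := Filter.atTop) ?_
    (hev.mono fun m hm => (hw _ hm).1)
  rw [tendsto_pi_nhds] at hp ⊢
  intro j
  rw [tendsto_subtype_rng]
  have hpj := (continuous_subtype_val.tendsto _).comp (hp j)
  have hd : Filter.Tendsto (fun m => ((w (φ m) j : ℝ) - x (φ m) j)) Filter.atTop (nhds 0) := by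
    have h0 : Filter.Tendsto (fun n : ℕ => 2 / ((n : ℝ) + 1)) Filter.atTop (nhds 0) := by
      have := (tendsto_one_div_add_atTop_nhds_zero_nat (𝕜 := ℝ)).const_mul 2
      simpa [div_eq_mul_inv] using this
    refine squeeze_zero_norm' (hev.mono fun m hm => ?_) (h0.comp hφ.tendsto_atTop)
    exact (hw _ hm).2 j
  have := hd.add hpj
  simpa using this

lemma faces_essential (U V : ℕ → Set HilbertCube) (hU : ∀ i, IsOpen (U i))
    (hV : ∀ i, IsOpen (V i)) (hUV : ∀ i, Disjoint (U i) (V i))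
    (hA : ∀ i, negFace i ⊆ U i) (hB : ∀ i, posFace i ⊆ V i) :
    ∃ p, ∀ i, p ∉ U i ∧ p ∉ V i := by
  choose x hx using exists_approx U V hUV hA hB
  obtain ⟨p, φ, hφ, hp⟩ := CompactSpace.tendsto_subseq x
  refine ⟨p, fun i => ?_⟩
  have h1 := mem_closure_approx (U i) i x φ hφ p hp fun n hn => (hx n i hn).1
  have h2 := mem_closure_approx (U i)ᶜ i x φ hφ p hp fun n hn => (hx n i hn).2
  rw [(hU i).isClosed_compl.closure_eq] at h2
  exact ⟨h2, fun h => disjoint_left.1 ((hUV i).closure_left (hV i)) h1 h⟩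

lemma isClosed_negFace (i : ℕ) : IsClosed (negFace i) :=
  isClosed_eq (by fun_prop) continuous_const

lemma isClosed_posFace (i : ℕ) : IsClosed (posFace i) :=
  isClosed_eq (by fun_prop) continuous_const

lemma disjoint_faces (i : ℕ) : Disjoint (negFace i) (posFace i) := by
  rw [disjoint_left]
  intro z h1 h2
  simp only [negFace, posFace, mem_ofPred_eq] at h1 h2
  linarith

lemma exists_continuum (U V : ℕ → Set HilbertCube) (hU : ∀ i, IsOpen (U i))
    (hV : ∀ i, IsOpen (V i)) (hUV : ∀ i, Disjoint (U i) (V i))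
    (hA : ∀ i, negFace (i + 1) ⊆ U i) (hB : ∀ i, posFace (i + 1) ⊆ V i) :
    ∃ C : Set HilbertCube, IsCompact C ∧ IsConnected C ∧ (C ∩ negFace 0).Nonempty ∧
      (C ∩ posFace 0).Nonempty ∧ ∀ p ∈ C, ∀ i, p ∉ U i ∧ p ∉ V i := by
  set K : Set HilbertCube := {p | ∀ i, p ∉ U i ∧ p ∉ V i} with hK
  have hKc : IsClosed K := by
    have : K = ⋂ i, (U i)ᶜ ∩ (V i)ᶜ := by
      ext p; simp [hK]
    rw [this]
    exact isClosed_iInter fun i => (hU i).isClosed_compl.inter (hV i).isClosed_compl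
  have : CompactSpace K := isCompact_iff_compactSpace.1 hKc.isCompact
  by_contra hcon
  let q : K → ConnectedComponents K := ConnectedComponents.mk
  have hq : Continuous q := ConnectedComponents.continuous_coe
  let A : Set K := Subtype.val ⁻¹' negFace 0
  let B : Set K := Subtype.val ⁻¹' posFace 0
  have hAc : IsClosed A := (isClosed_negFace 0).preimage continuous_subtype_val
  have hBc : IsClosed B := (isClosed_posFace 0).preimage continuous_subtype_val
  have hA' : IsClosed (q '' A) := (hAc.isCompact.image hq).isClosed
  have hB' : IsClosed (q '' B) := (hBc.isCompact.image hq).isClosed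
  have hd : q '' A ⊆ (q '' B)ᶜ := by
    rintro _ ⟨a, ha, rfl⟩ ⟨b, hb, hab⟩
    apply hcon
    have hab : connectedComponent b = connectedComponent a := ConnectedComponents.coe_eq_coe.1 hab
    refine ⟨Subtype.val '' connectedComponent a,
      (isClosed_connectedComponent.isCompact.image continuous_subtype_val),
      isConnected_connectedComponent.image _ continuous_subtype_val.continuousOn,
      ⟨a, ⟨a, mem_connectedComponent, rfl⟩, ha⟩,
      ⟨b, ⟨b, hab ▸ mem_connectedComponent, rfl⟩, hb⟩, ?_⟩
    rintro _ ⟨p, _, rfl⟩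
    exact p.2
  obtain ⟨D, hD, hAD, hDB⟩ := exists_clopen_of_closed_subset_open hA' hB'.isOpen_compl hd
  have hP : IsClopen (q ⁻¹' D) := hD.preimage hq
  have hP1 : IsClosed (Subtype.val '' (q ⁻¹' D)) :=
    (hP.isClosed.isCompact.image continuous_subtype_val).isClosed
  have hP2 : IsClosed (Subtype.val '' (q ⁻¹' D)ᶜ) :=
    (hP.compl.isClosed.isCompact.image continuous_subtype_val).isClosed
  obtain ⟨U0, V0, hU0, hV0, hs, ht, hdis⟩ := normal_separation (hP1.union (isClosed_negFace 0))
    (hP2.union (isClosed_posFace 0)) (by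
      rw [disjoint_left]
      rintro z (⟨a, ha, rfl⟩ | hz) (⟨b, hb, hbz⟩ | hz')
      · rw [Subtype.val_injective hbz] at hb
        exact hb ha
      · exact hDB ha ⟨a, hz', rfl⟩
      · exact hb (hAD ⟨b, by simpa [A, hbz] using hz, rfl⟩)
      · exact disjoint_left.1 (disjoint_faces 0) hz hz')
  obtain ⟨p, hp⟩ := faces_essential (fun i => Nat.casesOn i U0 U) (fun i => Nat.casesOn i V0 V)
    (by rintro (_ | i); exacts [hU0, hU i]) (by rintro (_ | i); exacts [hV0, hV i])
    (by rintro (_ | i); exacts [hdis, hUV i])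
    (by rintro (_ | i); exacts [subset_union_right.trans hs, hA i])
    (by rintro (_ | i); exacts [subset_union_right.trans ht, hB i])
  have hpK : p ∈ K := fun i => hp (i + 1)
  by_cases hpD : (⟨p, hpK⟩ : K) ∈ q ⁻¹' D
  · exact (hp 0).1 (hs (Or.inl ⟨_, hpD, rfl⟩))
  · exact (hp 0).2 (ht (Or.inl ⟨_, hpD, rfl⟩))

/-- Extending separators from a subspace. -/
lemma extend_sep (T A B W1 W2 U V : Set HilbertCube) (hW1 : IsClosed W1) (hW2 : IsClosed W2) (hW : Disjoint W1 W2)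
    (hA1 : W1 ⊆ interior A) (hB1 : W2 ⊆ interior B)
    (hUT : U ⊆ T) (hVT : V ⊆ T)
    (hU : ∃ O, IsOpen O ∧ U = O ∩ T) (hV : ∃ O, IsOpen O ∧ V = O ∩ T)
    (hUV : Disjoint U V) (hAU : A ∩ T ⊆ U) (hBV : B ∩ T ⊆ V) :
    ∃ U' V' : Set HilbertCube, IsOpen U' ∧ IsOpen V' ∧ Disjoint U' V' ∧ W1 ⊆ U' ∧ W2 ⊆ V' ∧
      U ⊆ U' ∧ V ⊆ V' := by
  obtain ⟨O1, hO1, hU⟩ := hU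
  obtain ⟨O2, hO2, hV⟩ := hV
  have key1 : Disjoint (closure U) (V ∪ W2) := by
    rw [disjoint_union_right]
    constructor
    · have : Disjoint U O2 := by
        rw [disjoint_left]; intro z h1 h2
        exact disjoint_left.1 hUV h1 (hV ▸ ⟨h2, hUT h1⟩)
      exact (this.closure_left hO2).mono_right (hV ▸ inter_subset_left)
    · have : Disjoint U (interior B) := by
        rw [disjoint_left]; intro z h1 h2
        exact disjoint_left.1 hUV h1 (hBV ⟨interior_subset h2, hUT h1⟩)
      exact (this.closure_left isOpen_interior).mono_right hB1
  have key2 : Disjoint (U ∪ W1) (closure V) := by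
    rw [disjoint_union_left]
    constructor
    · have : Disjoint O1 V := by
        rw [disjoint_left]; intro z h1 h2
        exact disjoint_left.1 hUV (hU ▸ ⟨h1, hVT h2⟩) h2
      exact (this.closure_right hO1).mono_left (hU ▸ inter_subset_left)
    · have : Disjoint (interior A) V := by
        rw [disjoint_left]; intro z h1 h2
        exact disjoint_left.1 hUV (hAU ⟨interior_subset h1, hVT h2⟩) h2
      exact (this.closure_right isOpen_interior).mono_left hA1
  have := completely_normal (s := U ∪ W1) (t := V ∪ W2)
    (by
      rw [closure_union, hW1.closure_eq, disjoint_union_left]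
      refine ⟨key1, ?_⟩
      rw [disjoint_union_right]
      exact ⟨(disjoint_union_left.1 key2).2.mono_right subset_closure, hW⟩)
    (by
      rw [closure_union, hW2.closure_eq, disjoint_union_right]
      refine ⟨key2, ?_⟩
      rw [disjoint_union_left]
      exact ⟨(disjoint_union_right.1 key1).2.mono_left subset_closure, hW⟩)
  rw [← separatedNhds_iff_disjoint] at this
  obtain ⟨U', V', h1, h2, h3, h4, h5⟩ := this
  exact ⟨U', V', h1, h2, h5, subset_union_right.trans h3, subset_union_right.trans h4,
    subset_union_left.trans h3, subset_union_left.trans h4⟩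

/-! ### The suspension map -/

lemma conv_mem {a b t : ℝ} (ha : a ∈ Icc (-1 : ℝ) 1) (hb : b ∈ Icc (-1 : ℝ) 1)
    (ht : t ∈ Icc (0 : ℝ) 1) : (1 - t) * a + t * b ∈ Icc (-1 : ℝ) 1 := by
  obtain ⟨a1, a2⟩ := ha
  obtain ⟨b1, b2⟩ := hb
  obtain ⟨t1, t2⟩ := ht
  constructor <;> nlinarith

/-- The parameter along the segment from `x` to `y`. -/
noncomputable def par (z : HilbertCube) : ℝ := (1 + (z 0 : ℝ)) / 2

lemma par_mem (z : HilbertCube) : par z ∈ Icc (0 : ℝ) 1 := by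
  have := (z 0).2
  simp only [mem_Icc] at this
  constructor <;> simp only [par] <;> linarith

/-- Suspension coordinates. -/
noncomputable def lam (k : ℕ) (z : HilbertCube) (i : ℕ) : ℝ :=
  if i = k then 0 else par z * (1 - par z)

lemma lam_mem (k : ℕ) (z : HilbertCube) (i : ℕ) : lam k z i ∈ Icc (0 : ℝ) 1 := by
  obtain ⟨h1, h2⟩ := par_mem z
  unfold lam
  split_ifs
  · simp
  · constructor <;> nlinarith

/-- The map collapsing the faces `W_0^±` to `x` and `y`, injective elsewhere. -/
noncomputable def susp (x y : HilbertCube) (k : ℕ) (z : HilbertCube) : HilbertCube := fun i =>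
  ⟨(1 - lam k z i) * ((1 - par z) * (x i : ℝ) + par z * (y i : ℝ)) +
      lam k z i * (z (Equiv.swap 0 k i) : ℝ),
    conv_mem (conv_mem (x i).2 (y i).2 (par_mem z)) (z _).2 (lam_mem k z i)⟩

lemma continuous_susp (x y : HilbertCube) (k : ℕ) : Continuous (susp x y k) := by
  have hp : Continuous par := by unfold par; fun_prop
  refine continuous_pi fun i => Continuous.subtype_mk ?_ _
  have hl : Continuous fun z => lam k z i := by
    unfold lam
    split_ifs
    · exact continuous_const
    · fun_prop
  fun_prop

lemma susp_neg (x y : HilbertCube) (k : ℕ) (z : HilbertCube) (hz : z ∈ negFace 0) :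
    susp x y k z = x := by
  have h : par z = 0 := by
    simp only [negFace, mem_ofPred_eq] at hz
    simp [par, hz]
  ext i
  simp [susp, lam, h]

lemma susp_pos (x y : HilbertCube) (k : ℕ) (z : HilbertCube) (hz : z ∈ posFace 0) :
    susp x y k z = y := by
  have h : par z = 1 := by
    simp only [posFace, mem_ofPred_eq] at hz
    simp only [par, hz]; norm_num
  ext i
  simp [susp, lam, h]

lemma susp_inj (x y : HilbertCube) (k : ℕ) (hk : x k ≠ y k) (z z' : HilbertCube)
    (h0 : z ∉ negFace 0) (h1 : z ∉ posFace 0) (h : susp x y k z = susp x y k z') (n : ℕ) :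
    z (n + 1) = z' (n + 1) := by
  have hc : ∀ i, (susp x y k z i : ℝ) = susp x y k z' i := fun i => by rw [h]
  have hpar : par z = par z' := by
    have := hc k
    simp only [susp, lam, if_true] at this
    have hne : (x k : ℝ) - y k ≠ 0 := fun e => hk (Subtype.ext (sub_eq_zero.1 e))
    have h2 : (par z - par z') * ((x k : ℝ) - y k) = 0 := by linear_combination -this
    exact sub_eq_zero.1 ((mul_eq_zero.1 h2).resolve_right hne)
  have hne : Equiv.swap 0 k (n + 1) ≠ k := by
    intro e
    have := congrArg (Equiv.swap 0 k) e
    simp at this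
  have := hc (Equiv.swap 0 k (n + 1))
  simp only [susp, lam, if_neg hne, Equiv.swap_apply_self, ← hpar] at this
  have hp0 : par z ≠ 0 := fun e => h0 (by
    simp only [negFace, mem_ofPred_eq]
    simp only [par] at e; linarith)
  have hp1 : 1 - par z ≠ 0 := fun e => h1 (by
    simp only [posFace, mem_ofPred_eq]
    simp only [par] at e; linarith)
  exact Subtype.ext (mul_left_cancel₀ (mul_ne_zero hp0 hp1) (add_left_cancel this))

end HC

/-- If `x ≠ y` are points of the Hilbert cube outside `S ⊆ Q` and `S`
intersects every continuum containing both `x` and `y`, then `S` is strongly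
infinite dimensional. -/
theorem stronglyInfiniteDimensional_of_meets_every_continuum_between_points
    (x y : HilbertCube) (hxy : x ≠ y) (S : Set HilbertCube)
    (hx : x ∉ S) (hy : y ∉ S)
    (hS : ∀ C : Set HilbertCube, IsCompact C → IsConnected C →
      x ∈ C → y ∈ C → (S ∩ C).Nonempty) :
    StronglyInfiniteDimensional S := by
  obtain ⟨k, hk⟩ := Function.ne_iff.1 hxy
  let f := HC.susp x y k
  have hf : Continuous f := HC.continuous_susp x y k
  have hneg : ∀ z, f z ∈ S → z ∉ negFace 0 := fun z hz h =>
    hx (HC.susp_neg x y k z h ▸ hz)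
  have hpos : ∀ z, f z ∈ S → z ∉ posFace 0 := fun z hz h =>
    hy (HC.susp_pos x y k z h ▸ hz)
  let A : ℕ → Set HilbertCube := fun n => {z | (z (n + 1) : ℝ) ≤ -(1 / 2)}
  let B : ℕ → Set HilbertCube := fun n => {z | (1 / 2 : ℝ) ≤ z (n + 1)}
  have hA : ∀ n, IsClosed (A n) := fun n => isClosed_le (by fun_prop) continuous_const
  have hB : ∀ n, IsClosed (B n) := fun n => isClosed_le continuous_const (by fun_prop)
  refine ⟨fun n => Subtype.val ⁻¹' (f '' A n), fun n => Subtype.val ⁻¹' (f '' B n), ?_, ?_⟩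
  · intro n
    refine ⟨((hA n).isCompact.image hf).isClosed.preimage continuous_subtype_val,
      ((hB n).isCompact.image hf).isClosed.preimage continuous_subtype_val, ?_⟩
    rw [disjoint_left]
    rintro ⟨s, hs⟩ ⟨z, hz, hzs⟩ ⟨w, hw, hws⟩
    simp only at hzs hws
    have hzS : f z ∈ S := hzs ▸ hs
    have := HC.susp_inj x y k hk z w (hneg z hzS) (hpos z hzS) (hzs.trans hws.symm) n
    simp only [A, B, mem_ofPred_eq] at hz hw
    rw [this] at hz
    linarith
  · intro L hL
    have key : ∀ n, ∃ U' V' : Set HilbertCube, IsOpen U' ∧ IsOpen V' ∧ Disjoint U' V' ∧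
        negFace (n + 1) ⊆ U' ∧ posFace (n + 1) ⊆ V' ∧
        ∀ z (h : f z ∈ S), z ∉ U' → z ∉ V' → (⟨f z, h⟩ : S) ∈ L n := by
      intro n
      obtain ⟨-, U, V, hU, hV, hUV, hAU, hBV, hLc⟩ := hL n
      obtain ⟨O1, hO1, rfl⟩ := isOpen_induced_iff.1 hU
      obtain ⟨O2, hO2, rfl⟩ := isOpen_induced_iff.1 hV
      obtain ⟨U', V', h1, h2, h3, h4, h5, h6, h7⟩ := HC.extend_sep (f ⁻¹' S) (A n) (B n)
        (negFace (n + 1)) (posFace (n + 1)) (f ⁻¹' O1 ∩ f ⁻¹' S) (f ⁻¹' O2 ∩ f ⁻¹' S)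
        (HC.isClosed_negFace _) (HC.isClosed_posFace _) (HC.disjoint_faces _)
        (by
          have ho : IsOpen {z : HilbertCube | (z (n + 1) : ℝ) < -(1 / 2)} :=
            isOpen_lt (by fun_prop) continuous_const
          refine Subset.trans ?_ (interior_maximal ?_ ho)
          · intro z hz
            simp only [negFace, mem_ofPred_eq] at hz ⊢
            rw [hz]; norm_num
          · intro z hz
            simp only [A, B, mem_ofPred_eq] at hz ⊢
            exact le_of_lt hz)
        (by
          have ho : IsOpen {z : HilbertCube | (1 / 2 : ℝ) < z (n + 1)} :=
            isOpen_lt continuous_const (by fun_prop)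
          refine Subset.trans ?_ (interior_maximal ?_ ho)
          · intro z hz
            simp only [posFace, mem_ofPred_eq] at hz ⊢
            rw [hz]; norm_num
          · intro z hz
            simp only [A, B, mem_ofPred_eq] at hz ⊢
            exact le_of_lt hz)
        inter_subset_right inter_subset_right
        ⟨_, hO1.preimage hf, rfl⟩ ⟨_, hO2.preimage hf, rfl⟩
        (by
          rw [disjoint_left]
          rintro z ⟨hz1, hzS⟩ ⟨hz2, _⟩
          exact disjoint_left.1 hUV (show (⟨f z, hzS⟩ : S) ∈ Subtype.val ⁻¹' O1 from hz1) hz2)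
        (by
          rintro z ⟨hz, hzS⟩
          exact ⟨hAU (a := ⟨f z, hzS⟩) ⟨z, hz, rfl⟩, hzS⟩)
        (by
          rintro z ⟨hz, hzS⟩
          exact ⟨hBV (a := ⟨f z, hzS⟩) ⟨z, hz, rfl⟩, hzS⟩)
      refine ⟨U', V', h1, h2, h3, h4, h5, fun z h hzU hzV => ?_⟩
      by_contra hc
      have hc' : (⟨f z, h⟩ : S) ∈ (L n)ᶜ := hc
      rw [hLc] at hc'
      rcases hc' with hc' | hc'
      · exact hzU (h6 ⟨hc', h⟩)
      · exact hzV (h7 ⟨hc', h⟩)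
    choose U' V' h1 h2 h3 h4 h5 h6 using key
    obtain ⟨C, hC, hCc, ⟨a, haC, ha⟩, ⟨b, hbC, hb⟩, hCK⟩ :=
      HC.exists_continuum U' V' h1 h2 h3 h4 h5
    obtain ⟨s, hsS, z, hzC, rfl⟩ := hS (f '' C) (hC.image hf) (hCc.image f hf.continuousOn)
      ⟨a, haC, HC.susp_neg x y k a ha⟩ ⟨b, hbC, HC.susp_pos x y k b hb⟩
    exact ⟨⟨f z, hsS⟩, mem_iInter.2 fun n => h6 n z hsS (hCK z hzC n).1 (hCK z hzC n).2⟩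
end
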